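/- Let 2 ≤ k < n and let V be a distribution of k-planes of class C¹ on ℝⁿ. Then for every d ∈ [0, k) there exists a k-dimensional embedded submanifold S ⊆ ℝⁿ of class C^{1,1} such that the Hausdorff dimension of the tangency set τ(S,V) equals d. -/

import Mathlib

noncomputable section
open MeasureTheory Set Module Filter Metric
open scoped ENNReal NNReal Topology RealInnerProductSpace

/-- `ℝⁿ` with the Euclidean norm. -/
abbrev Euc (n : ℕ) : Type := EuclideanSpace ℝ (Fin n)

variable {n : ℕ}

/-- A distribution of `k`-planes of class `C¹` on the open set `Ω ⊆ ℝⁿ`: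
a map into the Grassmannian `Gr(k,n)` that is locally spanned by `k`
vector fields of class `C¹`. -/
def IsC1PlaneField (k : ℕ) (Ω : Set (Euc n)) (V : Euc n → Submodule ℝ (Euc n)) : Prop :=
  IsOpen Ω ∧ (∀ x ∈ Ω, finrank ℝ (V x) = k) ∧
    ∀ x ∈ Ω, ∃ U : Set (Euc n), IsOpen U ∧ x ∈ U ∧ U ⊆ Ω ∧
      ∃ X : Fin k → Euc n → Euc n,
        (∀ i, ContDiffOn ℝ 1 (X i) U) ∧
        ∀ y ∈ U, V y = Submodule.span ℝ (Set.range fun i => X i y)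

/-- Tangency set of a surface `S` to the plane field `V`:
points of `S` where the tangent space of `S` (the tangent cone, which for a `C¹`
submanifold is exactly the classical tangent plane) coincides with `V(x)`. -/
def tangencySet (S : Set (Euc n)) (V : Euc n → Submodule ℝ (Euc n)) : Set (Euc n) :=
  {x ∈ S | tangentConeAt ℝ S x = (V x : Set (Euc n))}

/-- The graph map of `f : W → Wᗮ`. -/
def graphMap (W : Submodule ℝ (Euc n)) (f : ↥W → ↥Wᗮ) : ↥W → Euc n :=
  fun z => (z : Euc n) + (f z : Euc n)

/-- `S` is a `k`-dimensional embedded submanifold of `ℝⁿ` of class `C^{1,1}`: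
near each of its points it is the graph, over a `k`-plane `W`, of a `C¹` function
`f : W → Wᗮ` whose gradient is Lipschitz. -/
def IsC11Submanifold (k : ℕ) (S : Set (Euc n)) : Prop :=
  S.Nonempty ∧
  ∀ x ∈ S, ∃ (W : Submodule ℝ (Euc n)) (U : Set ↥W) (f : ↥W → ↥Wᗮ) (O : Set (Euc n)),
    finrank ℝ W = k ∧ IsOpen U ∧ ContDiffOn ℝ 1 f U ∧
    (∃ L : ℝ≥0, LipschitzOnWith L (fun z => fderiv ℝ f z) U) ∧
    IsOpen O ∧ x ∈ O ∧ S ∩ O = (graphMap W f '' U) ∩ O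

/-! Over the plane `W = V x₀`, the distribution near `x₀` consists of graphs of linear maps
`A y : W → Wᗮ`, and the graph of `f : W → Wᗮ` is tangent to `V` exactly where
`fderiv ℝ f z = A (z + f z)`, the contact equation. It is overdetermined, but it can be solved
on the product `C ^ k` of a self-similar Cantor set `C` of ratio `r < 1/2`: start from an affine
function with the slope prescribed at a corner of the unit cube, and at each generation glue in, by
a cutoff around each of the `2 ^ (m * k)` cubes, the affine function with the slope prescribed at a
corner of that cube. This changes the derivative by `O(r ^ m)` across gaps of width comparable to
`r ^ m`, hence the second derivative by `O(1)`, in disjoint gaps, so the limit is `C^{1,1}`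
with bounds depending only on those of `A`.

To keep the contact set from being larger, look for a solution of the form `F + u`, where
`∂ᵢu = dist(xᵢ, C) e` near the origin; truncating the distance at height `1 / ‖e‖` gives `u` a
Lipschitz constant independent of `e`. At contact points `dist(xᵢ, C) e` equals a function of `x`
whose Lipschitz constant is also independent of `e`, so if `e` is long, `x ↦ dist(xᵢ, C)` is a
strict contraction on the contact set near the origin. Such a set has no larger dimension than
`C ^ k`, because off `C` the line splits into countably many intervals on which the distance to
`C` is affine of slope `±1`. The dimension `k log 2 / log (1 / r)` of `C ^ k` takes all values in
`(0, k)`, and for `d = 0` a slope different from that of `V` suffices. -/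

section CantorSet

variable {ι : Type*} {r s : ℝ}

/-- The point of the Cantor set of ratio `r` with address `b`; it replaces the weights
`2 / 3 ^ (i + 1)` of the ternary Cantor set by `(1 - r) * r ^ i`. -/
def cantorCode (r : ℝ) (b : ℕ → Fin 2) : ℝ := ∑' i, (b i : ℝ) * ((1 - r) * r ^ i)

/-- The self-similar Cantor set `C ⊆ [0, 1]` of ratio `r`, that is, `C = r C ∪ ((1 - r) + r C)`. -/
def ratioCantorSet (r : ℝ) : Set ℝ := range (cantorCode r)

theorem fin_two_cast_le_one (c : Fin 2) : (c : ℝ) ≤ 1 := by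
  exact_mod_cast Nat.le_of_lt_succ c.isLt

theorem summable_one_sub_mul_pow (hr : 0 ≤ r) (hr1 : r < 1) :
    Summable fun i : ℕ => (1 - r) * r ^ i :=
  (summable_geometric_of_lt_one hr hr1).mul_left _

theorem norm_cantorCode_term_le (hr : 0 ≤ r) (hr1 : r < 1) (b : ℕ → Fin 2) (i : ℕ) :
    ‖(b i : ℝ) * ((1 - r) * r ^ i)‖ ≤ (1 - r) * r ^ i := by
  have hterm : 0 ≤ (1 - r) * r ^ i := mul_nonneg (sub_nonneg.2 hr1.le) (pow_nonneg hr i)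
  rw [Real.norm_of_nonneg (mul_nonneg (Nat.cast_nonneg _) hterm)]
  exact mul_le_of_le_one_left hterm (fin_two_cast_le_one _)

theorem summable_cantorCode (hr : 0 ≤ r) (hr1 : r < 1) (b : ℕ → Fin 2) :
    Summable fun i => (b i : ℝ) * ((1 - r) * r ^ i) :=
  (summable_one_sub_mul_pow hr hr1).of_norm_bounded (norm_cantorCode_term_le hr hr1 b)

theorem cantorCode_eq_head_add_tail (hr : 0 ≤ r) (hr1 : r < 1) (b : ℕ → Fin 2) :
    cantorCode r b = (1 - r) * (b 0 : ℝ) + r * cantorCode r fun i => b (i + 1) := by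
  rw [cantorCode, cantorCode, (summable_cantorCode hr hr1 b).tsum_eq_zero_add, ← tsum_mul_left,
    pow_zero, mul_one, mul_comm (1 - r)]
  simp only [pow_succ', mul_left_comm r]

theorem cantorCode_mem_Icc (hr : 0 ≤ r) (hr1 : r < 1) (b : ℕ → Fin 2) :
    cantorCode r b ∈ Icc (0 : ℝ) 1 := by
  have hsum : ∑' i : ℕ, (1 - r) * r ^ i = 1 := by
    rw [tsum_mul_left, tsum_geometric_of_lt_one hr hr1, mul_inv_cancel₀ (sub_pos.2 hr1).ne']
  refine ⟨tsum_nonneg fun i => ?_, hsum ▸ (summable_cantorCode hr hr1 b).tsum_le_tsum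
    (fun i => (le_abs_self _).trans (norm_cantorCode_term_le hr hr1 b i))
    (summable_one_sub_mul_pow hr hr1)⟩
  have := sub_pos.2 hr1
  positivity

theorem continuous_cantorCode (hr : 0 ≤ r) (hr1 : r < 1) : Continuous (cantorCode r) := by
  refine continuous_tsum (fun i => ?_) (summable_one_sub_mul_pow hr hr1)
    fun i b => norm_cantorCode_term_le hr hr1 b i
  exact ((continuous_of_discreteTopology (f := fun c : Fin 2 => (c : ℝ))).comp
    (continuous_apply i)).mul continuous_const

theorem isCompact_ratioCantorSet (hr : 0 ≤ r) (hr1 : r < 1) : IsCompact (ratioCantorSet r) :=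
  isCompact_range (continuous_cantorCode hr hr1)

theorem zero_mem_ratioCantorSet (r : ℝ) : (0 : ℝ) ∈ ratioCantorSet r :=
  ⟨0, by simp [cantorCode]⟩

theorem ratioCantorSet_subset_Icc (hr : 0 ≤ r) (hr1 : r < 1) : ratioCantorSet r ⊆ Icc 0 1 :=
  range_subset_iff.2 (cantorCode_mem_Icc hr hr1)

theorem exists_eq_of_mem_ratioCantorSet (hr : 0 ≤ r) (hr1 : r < 1) {t : ℝ}
    (ht : t ∈ ratioCantorSet r) :
    ∃ c : Fin 2, ∃ u ∈ ratioCantorSet r, t = (1 - r) * (c : ℝ) + r * u := by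
  obtain ⟨b, rfl⟩ := ht
  exact ⟨b 0, _, mem_range_self _, cantorCode_eq_head_add_tail hr hr1 b⟩

theorem mul_mem_ratioCantorSet (hr : 0 ≤ r) (hr1 : r < 1) {t : ℝ} (ht : t ∈ ratioCantorSet r) :
    r * t ∈ ratioCantorSet r := by
  obtain ⟨b, rfl⟩ := ht
  exact ⟨fun i => Nat.casesOn i 0 b, by rw [cantorCode_eq_head_add_tail hr hr1]; simp⟩

theorem cantorCode_sub_of_forall_lt_eq (hr : 0 ≤ r) (hr1 : r < 1) (m : ℕ) {b b' : ℕ → Fin 2}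
    (h : ∀ i < m, b i = b' i) :
    cantorCode r b - cantorCode r b' =
      r ^ m * (cantorCode r (fun i => b (i + m)) - cantorCode r fun i => b' (i + m)) := by
  induction m generalizing b b' with
  | zero => simp
  | succ m ih =>
    rw [cantorCode_eq_head_add_tail hr hr1 b, cantorCode_eq_head_add_tail hr hr1 b',
      h 0 m.succ_pos, add_sub_add_left_eq_sub, ← mul_sub,
      ih fun i hi => h (i + 1) (Nat.succ_lt_succ hi), pow_succ', mul_assoc]
    simp only [add_right_comm _ m 1, ← add_assoc]

theorem abs_cantorCode_sub_le (hr : 0 ≤ r) (hr1 : r < 1) {m : ℕ} {b b' : ℕ → Fin 2}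
    (h : ∀ i < m, b i = b' i) : |cantorCode r b - cantorCode r b'| ≤ r ^ m := by
  rw [cantorCode_sub_of_forall_lt_eq hr hr1 m h, abs_mul, abs_of_nonneg (pow_nonneg hr m)]
  refine mul_le_of_le_one_right (pow_nonneg hr m) ?_
  simpa using abs_sub_le_of_le_of_le (cantorCode_mem_Icc hr hr1 _).1 (cantorCode_mem_Icc hr hr1 _).2
    (cantorCode_mem_Icc hr hr1 _).1 (cantorCode_mem_Icc hr hr1 _).2

theorem le_abs_cantorCode_sub_of_head_ne (hr : 0 ≤ r) (hr1 : r < 1) {b b' : ℕ → Fin 2}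
    (h : b 0 ≠ b' 0) : 1 - 2 * r ≤ |cantorCode r b - cantorCode r b'| := by
  wlog hlt : b 0 < b' 0 generalizing b b'
  · rw [abs_sub_comm]
    exact this h.symm (h.lt_or_gt.resolve_left hlt)
  obtain ⟨hb, hb'⟩ : b 0 = 0 ∧ b' 0 = 1 := by omega
  have htail := (cantorCode_mem_Icc hr hr1 fun i => b (i + 1)).2
  have htail' := (cantorCode_mem_Icc hr hr1 fun i => b' (i + 1)).1
  rw [cantorCode_eq_head_add_tail hr hr1 b, cantorCode_eq_head_add_tail hr hr1 b', hb, hb',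
    abs_sub_comm]
  refine le_trans ?_ (le_abs_self _)
  norm_num
  nlinarith

theorem pow_firstDiff_le_abs_cantorCode_sub (hr : 0 ≤ r) (hr1 : r < 1) {b b' : ℕ → Fin 2}
    (h : b ≠ b') :
    (1 - 2 * r) * r ^ PiNat.firstDiff b b' ≤ |cantorCode r b - cantorCode r b'| := by
  rw [cantorCode_sub_of_forall_lt_eq hr hr1 _ fun i => PiNat.apply_eq_of_lt_firstDiff, abs_mul,
    abs_of_nonneg (pow_nonneg hr _), mul_comm]
  refine mul_le_mul_of_nonneg_left ?_ (pow_nonneg hr _)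
  exact le_abs_cantorCode_sub_of_head_ne hr hr1 (by simpa using PiNat.apply_firstDiff_ne h)

theorem cantorCode_injective (hr : 0 < r) (hr2 : r < 1 / 2) :
    Function.Injective (cantorCode r) := by
  intro b b' hbb'
  by_contra hne
  have hsep := pow_firstDiff_le_abs_cantorCode_sub hr.le (by linarith) hne
  rw [hbb', sub_self, abs_zero] at hsep
  have : 0 < 1 - 2 * r := by linarith
  exact (by positivity : 0 < (1 - 2 * r) * r ^ PiNat.firstDiff b b').not_ge hsep

theorem abs_ofDigits_sub_le_rpow_abs_cantorCode_sub (hr : 0 < r) (hr2 : r < 1 / 2) (hs : 0 ≤ s)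
    (hrs : r ^ s = 1 / 2) (b b' : ℕ → Fin 2) :
    |Real.ofDigits b - Real.ofDigits b'| ≤
      ((1 - 2 * r)⁻¹ * |cantorCode r b - cantorCode r b'|) ^ s := by
  have hgap : 0 < 1 - 2 * r := by linarith
  rcases eq_or_ne b b' with rfl | hne
  · rw [sub_self, abs_zero]
    positivity
  calc |Real.ofDigits b - Real.ofDigits b'| ≤ (((2 : ℕ) : ℝ) ^ PiNat.firstDiff b b')⁻¹ :=
        Real.abs_ofDigits_sub_ofDigits_le fun i => PiNat.apply_eq_of_lt_firstDiff
    _ = (r ^ PiNat.firstDiff b b') ^ s := by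
        rw [← Real.rpow_pow_comm hr.le, hrs, one_div, inv_pow, Nat.cast_ofNat]
    _ ≤ _ := by
        refine Real.rpow_le_rpow (by positivity) ?_ hs
        rw [le_inv_mul_iff₀ hgap]
        exact pow_firstDiff_le_abs_cantorCode_sub hr.le (by linarith) hne

theorem exists_ratio_rpow_eq_half (hs : 0 < s) (hs1 : s < 1) :
    ∃ r : ℝ, 0 < r ∧ r < 1 / 2 ∧ r ^ s = 1 / 2 := by
  refine ⟨(1 / 2) ^ s⁻¹, by positivity, ?_, Real.rpow_inv_rpow (by norm_num) hs.ne'⟩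
  simpa using Real.rpow_lt_rpow_of_exponent_gt (x := 1 / 2) (by norm_num) (by norm_num)
    ((one_lt_inv₀ hs).2 hs1)

/-- The product of copies of the Cantor set of ratio `r` indexed by `ι`. -/
def cantorCube (ι : Type*) (r : ℝ) : Set (ι → ℝ) := univ.pi fun _ => ratioCantorSet r

theorem cantorCube_subset_Icc (hr : 0 ≤ r) (hr1 : r < 1) : cantorCube ι r ⊆ Icc 0 1 :=
  fun _ hx => ⟨fun i => (ratioCantorSet_subset_Icc hr hr1 (hx i trivial)).1,
    fun i => (ratioCantorSet_subset_Icc hr hr1 (hx i trivial)).2⟩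

/-- The vertex of the unit cube with the given coordinates in `{0, 1}`. -/
def cubeVertex (τ : ι → Fin 2) : ι → ℝ := fun i => (τ i : ℝ)

theorem exists_eq_of_mem_cantorCube (hr : 0 ≤ r) (hr1 : r < 1) {z : ι → ℝ}
    (hz : z ∈ cantorCube ι r) :
    ∃ τ, ∃ z' ∈ cantorCube ι r, z = (1 - r) • cubeVertex τ + r • z' := by
  choose τ z' hz' hzz' using fun i => exists_eq_of_mem_ratioCantorSet hr hr1 (hz i trivial)
  exact ⟨τ, z', fun i _ => hz' i, funext hzz'⟩

theorem pow_smul_mem_cantorCube (hr : 0 ≤ r) (hr1 : r < 1) {x : ι → ℝ} (hx : x ∈ cantorCube ι r)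
    (m : ℕ) : r ^ m • x ∈ cantorCube ι r := by
  induction m with
  | zero => simpa using hx
  | succ m ih =>
    rw [pow_succ', mul_smul]
    exact fun i _ => mul_mem_ratioCantorSet hr hr1 (ih i trivial)

/-- The devil's staircase in each coordinate: it sends the point with addresses `b i` to the point
with binary expansions `b i`. -/
def cantorCubeToBinary (r : ℝ) (x : ι → ℝ) : ι → ℝ :=
  fun i => Real.ofDigits (Function.invFun (cantorCode r) (x i))

theorem unitCube_subset_cantorCubeToBinary_image (hr : 0 < r) (hr2 : r < 1 / 2) :
    (univ.pi fun _ : ι => Icc (0 : ℝ) 1) ⊆ cantorCubeToBinary r '' cantorCube ι r := by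
  intro y hy
  choose b _ hb using fun i => Real.ofDigits_SurjOn (b := 2) one_lt_two (hy i trivial)
  refine ⟨fun i => cantorCode r (b i), fun i _ => mem_range_self _, funext fun i => ?_⟩
  rw [cantorCubeToBinary, Function.leftInverse_invFun (cantorCode_injective hr hr2), hb]

variable [Fintype ι]

theorem norm_le_one_of_mem_cantorCube (hr : 0 ≤ r) (hr1 : r < 1) {x : ι → ℝ}
    (hx : x ∈ cantorCube ι r) : ‖x‖ ≤ 1 := by
  refine (pi_norm_le_iff_of_nonneg zero_le_one).2 fun i => ?_
  have := cantorCube_subset_Icc hr hr1 hx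
  exact (Real.norm_of_nonneg (this.1 i)).trans_le (this.2 i)

theorem dimH_cantorCube_le_dimH_inter (hr : 0 < r) (hr1 : r < 1) {U : Set (ι → ℝ)}
    (hU : U ∈ 𝓝 0) : dimH (cantorCube ι r) ≤ dimH (cantorCube ι r ∩ U) := by
  obtain ⟨ε, hε, hεU⟩ := Metric.mem_nhds_iff.1 hU
  obtain ⟨m, hm⟩ := exists_pow_lt_of_lt_one hε hr1
  have hpos : 0 < r ^ m := pow_pos hr m
  have hsub : cantorCube ι r ⊆ (fun x => (r ^ m)⁻¹ • x) '' (cantorCube ι r ∩ U) := by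
    refine fun x hx => ⟨r ^ m • x, ⟨pow_smul_mem_cantorCube hr.le hr1 hx m, hεU ?_⟩,
      inv_smul_smul₀ hpos.ne' x⟩
    rw [mem_ball_zero_iff, norm_smul, Real.norm_of_nonneg hpos.le]
    exact (mul_le_of_le_one_right hpos.le (norm_le_one_of_mem_cantorCube hr.le hr1 hx)).trans_lt hm
  exact (dimH_mono hsub).trans ((lipschitzWith_smul (r ^ m)⁻¹).dimH_image_le _)

theorem dimH_unitCube : dimH (univ.pi fun _ : ι => Icc (0 : ℝ) 1) = Fintype.card ι := by
  rw [Real.dimH_of_nonempty_interior, finrank_fintype_fun_eq_card]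
  rw [interior_pi_set finite_univ]
  exact ⟨fun _ => 1 / 2, fun i _ => by norm_num⟩

theorem holderOnWith_cantorCubeToBinary (hr : 0 < r) (hr2 : r < 1 / 2) (hs : 0 ≤ s)
    (hrs : r ^ s = 1 / 2) :
    HolderOnWith (((1 - 2 * r)⁻¹) ^ s).toNNReal s.toNNReal (cantorCubeToBinary r)
      (cantorCube ι r) := by
  have hgap : 0 < 1 - 2 * r := by linarith
  intro x hx y hy
  refine edist_pi_le_iff.2 fun i => ?_
  rw [edist_dist, edist_dist, Real.coe_toNNReal _ hs, ENNReal.ofReal_rpow_of_nonneg dist_nonneg hs,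
    ← ENNReal.ofReal, ← ENNReal.ofReal_mul (by positivity),
    ← Real.mul_rpow (by positivity) dist_nonneg]
  refine ENNReal.ofReal_le_ofReal
    ((abs_ofDigits_sub_le_rpow_abs_cantorCode_sub hr hr2 hs hrs _ _).trans ?_)
  rw [Function.invFun_eq (hx i trivial), Function.invFun_eq (hy i trivial), ← Real.dist_eq]
  gcongr
  exact dist_le_pi_dist x y i

theorem le_dimH_cantorCube (hr : 0 < r) (hr2 : r < 1 / 2) (hs : 0 < s) (hrs : r ^ s = 1 / 2) :
    ENNReal.ofReal (s * Fintype.card ι) ≤ dimH (cantorCube ι r) := by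
  have hle : (Fintype.card ι : ℝ≥0∞) ≤ dimH (cantorCube ι r) / ENNReal.ofReal s := by
    rw [← dimH_unitCube]
    exact (dimH_mono (unitCube_subset_cantorCubeToBinary_image hr hr2)).trans
      ((holderOnWith_cantorCubeToBinary hr hr2 hs.le hrs).dimH_image_le (by simpa using hs))
  rw [ENNReal.le_div_iff_mul_le (Or.inl (by simpa using hs)) (Or.inl ENNReal.ofReal_ne_top)] at hle
  rwa [mul_comm, ENNReal.ofReal_mul (by positivity), ENNReal.ofReal_natCast]

theorem exists_cantorCube_subset_iUnion_closedBall (ι : Type*) [Fintype ι] (hr : 0 ≤ r)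
    (hr1 : r < 1) (N : ℕ) :
    ∃ c : (ι → Fin N → Fin 2) → ι → ℝ, cantorCube ι r ⊆ ⋃ w, closedBall (c w) (r ^ N) := by
  refine ⟨fun w i => cantorCode r fun j => if h : j < N then w i ⟨j, h⟩ else 0, fun x hx => ?_⟩
  choose b hb using fun i => hx i trivial
  refine mem_iUnion.2 ⟨fun i j => b i j, (dist_pi_le_iff (pow_nonneg hr N)).2 fun i => ?_⟩
  rw [← hb i]
  exact abs_cantorCode_sub_le hr hr1 fun j hj => by rw [dif_pos hj]

theorem two_pow_pow_mul_rpow (hr : 0 ≤ r) (hrs : r ^ s = 1 / 2) (N c : ℕ) :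
    ((2 : ℝ) ^ N) ^ c * (2 * r ^ N) ^ (s * c) = 2 ^ (s * c) := by
  have hpow : (r ^ N) ^ (s * c) = (((2 : ℝ) ^ N) ^ c)⁻¹ := by
    rw [Real.rpow_mul_natCast (by positivity), ← Real.rpow_pow_comm hr, hrs, one_div, inv_pow,
      inv_pow]
  rw [Real.mul_rpow zero_le_two (by positivity), hpow, mul_comm, mul_assoc,
    inv_mul_cancel₀ (by positivity), mul_one]

theorem dimH_cantorCube_le (hr : 0 < r) (hr2 : r < 1 / 2) (hs : 0 ≤ s) (hrs : r ^ s = 1 / 2) :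
    dimH (cantorCube ι r) ≤ ENNReal.ofReal (s * Fintype.card ι) := by
  choose c hc using exists_cantorCube_subset_iUnion_closedBall ι hr.le (by linarith)
  classical
  set D : ℝ := s * Fintype.card ι with hD
  have hD0 : 0 ≤ D := by positivity
  have hdiam (N) (w) : ediam (closedBall (c N w) (r ^ N)) ≤ ENNReal.ofReal (2 * r ^ N) := by
    rw [← closedEBall_ofReal (by positivity), ENNReal.ofReal_mul zero_le_two, ENNReal.ofReal_ofNat]
    exact ediam_closedEBall_le
  have hdiam0 : Tendsto (fun N => ENNReal.ofReal (2 * r ^ N)) atTop (𝓝 0) := by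
    simpa using ENNReal.tendsto_ofReal
      ((tendsto_pow_atTop_nhds_zero_of_lt_one hr.le (by linarith)).const_mul 2)
  have hsum (N : ℕ) : ∑ w, ediam (closedBall (c N w) (r ^ N)) ^ D ≤ ENNReal.ofReal (2 ^ D) :=
    calc _ ≤ ∑ _w : ι → Fin N → Fin 2, ENNReal.ofReal ((2 * r ^ N) ^ D) :=
          Finset.sum_le_sum fun w _ => by
            rw [← ENNReal.ofReal_rpow_of_nonneg (by positivity) hD0]
            exact ENNReal.rpow_le_rpow (hdiam N w) hD0
      _ = ENNReal.ofReal (2 ^ D) := by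
          rw [Finset.sum_const, nsmul_eq_mul, ← ENNReal.ofReal_natCast,
            ← ENNReal.ofReal_mul (by positivity), Finset.card_univ, Fintype.card_fun,
            Fintype.card_fun, Fintype.card_fin, Fintype.card_fin, Nat.cast_pow, Nat.cast_pow,
            Nat.cast_ofNat, two_pow_pow_mul_rpow hr.le hrs]
  refine dimH_le_of_hausdorffMeasure_ne_top ?_
  rw [Real.coe_toNNReal _ hD0]
  refine ((Measure.hausdorffMeasure_le_liminf_sum D _ _ hdiam0 _ (.of_forall hdiam)
    (.of_forall hc)).trans_lt ?_).ne
  exact (liminf_le_of_frequently_le' (Frequently.of_forall hsum)).trans_lt ENNReal.ofReal_lt_top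

theorem dimH_cantorCube (hr : 0 < r) (hr2 : r < 1 / 2) (hs : 0 < s) (hrs : r ^ s = 1 / 2) :
    dimH (cantorCube ι r) = ENNReal.ofReal (s * Fintype.card ι) :=
  (dimH_cantorCube_le hr hr2 hs.le hrs).antisymm (le_dimH_cantorCube hr hr2 hs hrs)

end CantorSet

section DistanceCells

variable {ι X Y : Type*}

theorem infDist_eq_infDist_add_dist [PseudoMetricSpace X] {C : Set X} {p q t : X} (hp : p ∈ C)
    (hpt : infDist t C = dist t p) (hq : dist t q + dist q p = dist t p) :
    infDist t C = infDist q C + dist t q :=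
  infDist_le_infDist_add_dist.antisymm <| by linarith [infDist_le_dist_of_mem (x := q) hp]

theorem dimH_le_dimH_image [MetricSpace X] [MetricSpace Y] {f : X → Y} {s : Set X}
    (h : ∀ x ∈ s, ∀ y ∈ s, dist x y ≤ dist (f x) (f y)) : dimH s ≤ dimH (f '' s) := by
  have hanti : AntilipschitzWith 1 (s.domRestrict f) :=
    AntilipschitzWith.of_le_mul_dist fun x y => by simpa using! h x x.2 y y.2
  calc dimH s = dimH (univ : Set s) := by
        rw [← isometry_subtype_coe.dimH_image univ, image_univ, Subtype.range_coe]
    _ ≤ dimH (s.domRestrict f '' univ) := hanti.le_dimH_image univ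
    _ = dimH (f '' s) := by rw [image_univ, range_domRestrict]

/-- A countable cover of the line by `C` itself and by sets on which the distance to `C` is affine
with slope `1` or `-1`. -/
def distanceCell (C : Set ℝ) : Option (ℚ × ℤˣ) → Set ℝ
  | none => C
  | some (q, ε) => {t | infDist t C = infDist (q : ℝ) C + (ε : ℤ) * (t - q)}

theorem exists_mem_distanceCell {C : Set ℝ} (hC : IsClosed C) (hne : C.Nonempty) (t : ℝ) :
    ∃ o, t ∈ distanceCell C o := by
  obtain ⟨p, hp, hpt⟩ := hC.exists_infDist_eq_dist hne t
  rcases lt_trichotomy p t with hlt | rfl | hlt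
  · obtain ⟨q, hpq, hqt⟩ := exists_rat_btwn hlt
    have h := infDist_eq_infDist_add_dist hp hpt (q := (q : ℝ)) (by
      simp only [Real.dist_eq]
      rw [abs_of_pos, abs_of_pos, abs_of_pos] <;> linarith)
    rw [Real.dist_eq, abs_of_pos (sub_pos.2 hqt)] at h
    exact ⟨some (q, 1), by simpa [distanceCell] using h⟩
  · exact ⟨none, hp⟩
  · obtain ⟨q, htq, hqp⟩ := exists_rat_btwn hlt
    have h := infDist_eq_infDist_add_dist hp hpt (q := (q : ℝ)) (by
      simp only [Real.dist_eq]
      rw [abs_of_neg, abs_of_neg, abs_of_neg] <;> linarith)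
    rw [Real.dist_eq, abs_of_neg (sub_neg.2 htq)] at h
    exact ⟨some (q, -1), by simpa [distanceCell] using h⟩

theorem abs_infDist_sub_eq_of_mem_distanceCell {C : Set ℝ} {o : Option (ℚ × ℤˣ)} (ho : o ≠ none)
    {t t' : ℝ} (ht : t ∈ distanceCell C o) (ht' : t' ∈ distanceCell C o) :
    |infDist t C - infDist t' C| = |t - t'| := by
  obtain ⟨⟨q, ε⟩, rfl⟩ := Option.ne_none_iff_exists'.1 ho
  rw [show infDist t C = _ from ht, show infDist t' C = _ from ht', add_sub_add_left_eq_sub,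
    ← mul_sub, sub_sub_sub_cancel_right, abs_mul, ← Int.cast_abs, Int.isUnit_iff_abs_eq.1 ε.isUnit,
    Int.cast_one, one_mul]

/-- Where a coordinate lies off `C`, the distances to `C` determine it up to the strict contraction
`κ`; hence only the coordinates in `C` contribute to the dimension. -/
theorem dimH_le_dimH_pi_of_abs_infDist_sub_le [Fintype ι] {C : Set ℝ} (hC : IsClosed C)
    (hne : C.Nonempty) {κ : ℝ} (hκ : κ < 1) {T : Set (ι → ℝ)}
    (hT : ∀ x ∈ T, ∀ x' ∈ T, ∀ i, |infDist (x i) C - infDist (x' i) C| ≤ κ * dist x x') :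
    dimH T ≤ dimH (univ.pi fun _ : ι => C) := by
  classical
  obtain ⟨p, hp⟩ := hne
  choose o ho using exists_mem_distanceCell hC ⟨p, hp⟩
  let cell (c : ι → Option (ℚ × ℤˣ)) : Set (ι → ℝ) := T ∩ univ.pi fun i => distanceCell C (c i)
  have hcover : T ⊆ ⋃ c, cell c :=
    fun x hx => mem_iUnion.2 ⟨fun i => o (x i), hx, fun i _ => ho (x i)⟩
  refine (dimH_mono hcover).trans ((dimH_iUnion cell).trans_le (iSup_le fun c => ?_))
  let π (x : ι → ℝ) : ι → ℝ := fun i => if c i = none then x i else p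
  refine (dimH_le_dimH_image (f := π) fun x hx x' hx' => ?_).trans (dimH_mono ?_)
  · have hmax : dist x x' ≤ max (κ * dist x x') (dist (π x) (π x')) := by
      refine (dist_pi_le_iff (le_max_of_le_right dist_nonneg)).2 fun i => ?_
      by_cases hi : c i = none
      · refine le_max_of_le_right ?_
        simpa [π, hi] using dist_le_pi_dist (π x) (π x') i
      · rw [Real.dist_eq, ← abs_infDist_sub_eq_of_mem_distanceCell hi (hx.2 i trivial)
          (hx'.2 i trivial)]
        exact le_max_of_le_left (hT x hx.1 x' hx'.1 i)
    rcases le_max_iff.1 hmax with h | h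
    · nlinarith [dist_nonneg (x := x) (y := x'), dist_nonneg (x := π x) (y := π x')]
    · exact h
  · rintro _ ⟨x, hx, rfl⟩ i -
    by_cases hi : c i = none
    · simpa only [π, hi, if_true, distanceCell] using hx.2 i trivial
    · simpa only [π, hi, if_false] using hp

end DistanceCells

section CellBump

variable {ι : Type*} {r : ℝ}

/-- The affine coordinate of the sub-cube of side `r` at the vertex `τ` of the unit cube. -/
def childCoord (r : ℝ) (τ : ι → Fin 2) (z : ι → ℝ) : ι → ℝ := r⁻¹ • (z - (1 - r) • cubeVertex τ)

theorem eq_add_smul_childCoord (hr : r ≠ 0) (τ : ι → Fin 2) (z : ι → ℝ) :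
    z = (1 - r) • cubeVertex τ + r • childCoord r τ z := by
  rw [childCoord, smul_inv_smul₀ hr, add_sub_cancel]

/-- A cutoff for the sub-cubes of side `r` of the unit cube: `φ` is `1` on the neighbourhood `U` of
the unit cube, its copies attached to distinct sub-cubes do not interfere, and all copies are
supported in `U`. -/
structure IsCellBump [Fintype ι] (r : ℝ) (U : Set (ι → ℝ)) (φ : (ι → ℝ) → ℝ) : Prop where
  isOpen : IsOpen U
  Icc_subset : Icc 0 1 ⊆ U
  contDiff : ContDiff ℝ 2 φ
  hasCompactSupport : HasCompactSupport φ
  eqOn_one : EqOn φ 1 U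
  eq_zero_of_ne : ∀ ⦃τ σ z⦄, τ ≠ σ → childCoord r τ z ∈ U → φ (childCoord r σ z) = 0
  tsupport_comp_subset : ∀ τ, tsupport (φ ∘ childCoord r τ) ⊆ U

theorem mem_Icc_zero_one_iff_dist_le [Fintype ι] {z : ι → ℝ} :
    z ∈ Icc (0 : ι → ℝ) 1 ↔ dist z (fun _ => 1 / 2) ≤ 1 / 2 := by
  simp only [dist_pi_le_iff one_half_pos.le, Real.dist_eq, mem_Icc, Pi.le_def, ← forall_and, abs_le,
    Pi.zero_apply, Pi.one_apply]
  refine forall_congr' fun i => ⟨fun h => ⟨?_, ?_⟩, fun h => ⟨?_, ?_⟩⟩ <;> linarith [h.1, h.2]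

theorem cubeVertex_mem_Icc (τ : ι → Fin 2) : cubeVertex τ ∈ Icc (0 : ι → ℝ) 1 :=
  ⟨fun _ => Nat.cast_nonneg _, fun _ => fin_two_cast_le_one _⟩

theorem one_le_dist_cubeVertex [Fintype ι] {τ σ : ι → Fin 2} (h : τ ≠ σ) :
    1 ≤ dist (cubeVertex τ) (cubeVertex σ) := by
  obtain ⟨i, hi⟩ := Function.ne_iff.1 h
  refine le_trans ?_ (dist_le_pi_dist _ _ i)
  rw [cubeVertex, cubeVertex, Nat.dist_cast_real]
  exact Nat.pairwise_one_le_dist (Fin.val_ne_of_ne hi)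

variable [Fintype ι]

theorem div_le_dist_childCoord (hr : 0 < r) (hr1 : r ≤ 1) {τ σ : ι → Fin 2} (h : τ ≠ σ)
    (z : ι → ℝ) : (1 - r) / r ≤ dist (childCoord r τ z) (childCoord r σ z) := by
  have hnn : 0 ≤ 1 - r := sub_nonneg.2 hr1
  rw [childCoord, childCoord, dist_smul₀, dist_sub_left, dist_smul₀,
    Real.norm_of_nonneg (by positivity), Real.norm_of_nonneg hnn, div_eq_inv_mul]
  exact mul_le_mul_of_nonneg_left (le_mul_of_one_le_right hnn (one_le_dist_cubeVertex h))
    (by positivity)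

theorem dist_le_of_dist_childCoord_le (hr : 0 < r) (hr1 : r ≤ 1) {τ : ι → Fin 2} {z : ι → ℝ} {β : ℝ}
    (h : dist (childCoord r τ z) (fun _ => 1 / 2) ≤ β) :
    dist z (fun _ => 1 / 2) ≤ (1 - r) * (1 / 2) + r * β := by
  have hvertex := mem_Icc_zero_one_iff_dist_le.1 (cubeVertex_mem_Icc τ)
  set m : ι → ℝ := fun _ => 1 / 2
  calc dist z m = dist ((1 - r) • cubeVertex τ + r • childCoord r τ z) ((1 - r) • m + r • m) := by
        rw [← eq_add_smul_childCoord hr.ne', ← add_smul, sub_add_cancel, one_smul]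
    _ ≤ (1 - r) * dist (cubeVertex τ) m + r * dist (childCoord r τ z) m := by
        refine (dist_add_add_le _ _ _ _).trans_eq ?_
        rw [dist_smul₀, dist_smul₀, Real.norm_of_nonneg hr.le,
          Real.norm_of_nonneg (sub_nonneg.2 hr1)]
    _ ≤ _ := by
        have := sub_nonneg.2 hr1
        gcongr

theorem exists_isCellBump (ι : Type*) [Fintype ι] (hr : 0 < r) (hr2 : r < 1 / 2) :
    ∃ (U : Set (ι → ℝ)) (φ : (ι → ℝ) → ℝ), IsCellBump r U φ := by
  set m : ι → ℝ := fun _ => 1 / 2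
  set s : ℝ := (1 - 2 * r) / (4 * r) with hs
  have hrs : r * s = (1 - 2 * r) / 4 := by rw [hs]; field_simp
  have hs0 : 0 < s := div_pos (by linarith) (by linarith)
  let f : ContDiffBump m := ⟨(1 + s) / 2, (1 + 2 * s) / 2, by positivity, by linarith⟩
  have hcoord (τ : ι → Fin 2) : Continuous (childCoord r τ) := by unfold childCoord; fun_prop
  refine ⟨ball m f.rIn, f, isOpen_ball, fun z hz => ?_, f.contDiff, f.hasCompactSupport,
    fun z hz => f.one_of_mem_closedBall (ball_subset_closedBall hz), fun τ σ z hne hz => ?_,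
    fun τ z hz => ?_⟩
  · refine mem_ball.2 ((mem_Icc_zero_one_iff_dist_le.1 hz).trans_lt ?_)
    change 1 / 2 < (1 + s) / 2
    linarith
  · by_contra hσ
    have hlt : dist (childCoord r σ z) m < (1 + 2 * s) / 2 :=
      not_le.1 fun hle => hσ (f.zero_of_le_dist hle)
    have hz : dist (childCoord r τ z) m < (1 + s) / 2 := hz
    have hfar := div_le_dist_childCoord hr (by linarith) hne z
    rw [div_le_iff₀ hr] at hfar
    nlinarith [dist_triangle_right (childCoord r τ z) (childCoord r σ z) m]
  · have hle := tsupport_comp_subset_preimage f (hcoord τ) hz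
    rw [mem_preimage, f.tsupport_eq, mem_closedBall] at hle
    refine (dist_le_of_dist_childCoord_le hr (by linarith) hle).trans_lt ?_
    change (1 - r) * (1 / 2) + r * ((1 + 2 * s) / 2) < (1 + s) / 2
    nlinarith

end CellBump

section Prefractal

variable {ι Y : Type*}

/-- A sub-cube `corner + side • [0, 1]^ι` of the construction, together with the value at its corner
of the function under construction. -/
structure TaggedCube (ι Y : Type*) where
  side : ℝ
  corner : ι → ℝ
  value : Y

namespace TaggedCube

/-- The affine coordinate in which the tagged cube is the unit cube. -/
def coord (c : TaggedCube ι Y) (x : ι → ℝ) : ι → ℝ := c.side⁻¹ • (x - c.corner)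

theorem continuous_coord (c : TaggedCube ι Y) : Continuous c.coord := by unfold coord; fun_prop

theorem hasFDerivAt_side_smul_comp_coord [Finite ι] {c : TaggedCube ι Y} {x : ι → ℝ}
    {g : (ι → ℝ) → ι → ℝ} (hc : c.side ≠ 0) (hg : DifferentiableAt ℝ g (c.coord x)) :
    HasFDerivAt (fun x => c.side • g (c.coord x)) (fderiv ℝ g (c.coord x)) x := by
  cases nonempty_fintype ι
  have hcoord : HasFDerivAt c.coord (c.side⁻¹ • ContinuousLinearMap.id ℝ (ι → ℝ)) x :=
    ((hasFDerivAt_id x).sub_const c.corner).const_smul c.side⁻¹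
  refine ((hg.hasFDerivAt.comp x hcoord).const_smul c.side).congr_fderiv ?_
  rw [ContinuousLinearMap.comp_smul, smul_inv_smul₀ hc, ContinuousLinearMap.comp_id]

variable [NormedAddCommGroup Y] [NormedSpace ℝ Y] {A : (ι → ℝ) × Y → (ι → ℝ) →L[ℝ] Y}
  {U : Set (ι → ℝ)} {φ : (ι → ℝ) → ℝ} {r : ℝ} {L a : ℝ≥0} {c : TaggedCube ι Y} {τ : ι → Fin 2}
  {x : ι → ℝ}

/-- The slope prescribed by the field `A` at the corner of the tagged cube. -/
def slope (A : (ι → ℝ) × Y → (ι → ℝ) →L[ℝ] Y) (c : TaggedCube ι Y) : (ι → ℝ) →L[ℝ] Y :=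
  A (c.corner, c.value)

/-- The affine function with the tag as value at the corner and the slope prescribed there. -/
def plane (A : (ι → ℝ) × Y → (ι → ℝ) →L[ℝ] Y) (c : TaggedCube ι Y) (x : ι → ℝ) : Y :=
  c.value + c.slope A (x - c.corner)

/-- The sub-cube of relative side `r` at the vertex `τ`, tagged by the value of the affine function
of its parent. -/
def child (A : (ι → ℝ) × Y → (ι → ℝ) →L[ℝ] Y) (r : ℝ) (c : TaggedCube ι Y) (τ : ι → Fin 2) :
    TaggedCube ι Y where
  side := r * c.side
  corner := c.corner + (c.side * (1 - r)) • cubeVertex τ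
  value := c.plane A (c.corner + (c.side * (1 - r)) • cubeVertex τ)

theorem coord_child (hc : 0 < c.side) (x : ι → ℝ) :
    (c.child A r τ).coord x = childCoord r τ (c.coord x) := by
  have : (x - c.corner) - (c.side * (1 - r)) • cubeVertex τ =
      c.side • (c.coord x - (1 - r) • cubeVertex τ) := by
    rw [coord, smul_sub, smul_inv_smul₀ hc.ne', mul_smul]
  rw [coord, childCoord, child, ← sub_sub, this, mul_inv, mul_smul, inv_smul_smul₀ hc.ne']

theorem side_child_pos (hr : 0 < r) (hc : 0 < c.side) : 0 < (c.child A r τ).side := mul_pos hr hc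

theorem plane_corner (c : TaggedCube ι Y) : c.plane A c.corner = c.value := by simp [plane]

theorem plane_child_sub_plane (c : TaggedCube ι Y) (τ : ι → Fin 2) (x : ι → ℝ) :
    (c.child A r τ).plane A x - c.plane A x =
      ((c.child A r τ).slope A - c.slope A) (x - (c.child A r τ).corner) := by
  set d := c.child A r τ
  have hvalue : d.value = c.plane A d.corner := rfl
  rw [plane, hvalue, plane, plane, sub_apply,
    ← sub_add_sub_cancel x d.corner c.corner, map_add]
  abel

theorem hasFDerivAt_plane [Finite ι] (c : TaggedCube ι Y) (x : ι → ℝ) :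
    HasFDerivAt (c.plane A) (c.slope A) x := by
  cases nonempty_fintype ι
  exact ((c.slope A).hasFDerivAt.comp x ((hasFDerivAt_id x).sub_const _)).const_add _

variable [Fintype ι]

theorem contDiff_plane (c : TaggedCube ι Y) : ContDiff ℝ 2 (c.plane A) := by
  unfold plane; fun_prop

theorem norm_map_sub_slope_le (hA : LipschitzWith L A) (ha : ∀ z, ‖A z‖ ≤ a) (c : TaggedCube ι Y)
    (x : ι → ℝ) : ‖A (x, c.plane A x) - c.slope A‖ ≤ L * ((1 + a) * ‖x - c.corner‖) := by
  refine (hA.norm_sub_le _ _).trans (mul_le_mul_of_nonneg_left (max_le ?_ ?_) L.2)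
  · exact le_mul_of_one_le_left (norm_nonneg _) (le_add_of_nonneg_right a.2)
  · calc ‖c.plane A x - c.value‖ = ‖c.slope A (x - c.corner)‖ := by simp [plane]
      _ ≤ a * ‖x - c.corner‖ := (c.slope A).le_of_opNorm_le (ha _) _
      _ ≤ (1 + a) * ‖x - c.corner‖ := by
        gcongr
        exact le_add_of_nonneg_left zero_le_one

theorem norm_slope_child_sub_slope_le (hr : 0 ≤ r) (hr1 : r ≤ 1) (hA : LipschitzWith L A)
    (ha : ∀ z, ‖A z‖ ≤ a) (hc : 0 ≤ c.side) (τ : ι → Fin 2) :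
    ‖(c.child A r τ).slope A - c.slope A‖ ≤ L * ((1 + a) * c.side) := by
  refine (norm_map_sub_slope_le hA ha c _).trans ?_
  have hvertex : ‖cubeVertex τ‖ ≤ 1 := (pi_norm_le_iff_of_nonneg zero_le_one).2 fun i => by
    simpa [cubeVertex] using fin_two_cast_le_one (τ i)
  gcongr
  rw [child, add_sub_cancel_left, norm_smul, norm_mul, Real.norm_of_nonneg hc,
    Real.norm_of_nonneg (sub_nonneg.2 hr1), mul_assoc]
  exact mul_le_of_le_one_right hc (mul_le_one₀ (sub_le_self 1 hr) (norm_nonneg _) hvertex)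

variable [DecidableEq ι]

/-- The `N`-th approximation on the tagged cube: outside the children it is the affine function of
the cube, and on each child it is the `(N - 1)`-st approximation of that child, the two being glued
by `φ`. -/
def prefractal (A : (ι → ℝ) × Y → (ι → ℝ) →L[ℝ] Y) (φ : (ι → ℝ) → ℝ) (r : ℝ) :
    ℕ → TaggedCube ι Y → (ι → ℝ) → Y
  | 0, c, x => c.plane A x
  | N + 1, c, x => c.plane A x + ∑ τ, φ ((c.child A r τ).coord x) •
      (prefractal A φ r N (c.child A r τ) x - c.plane A x)

theorem contDiff_prefractal (hφ : ContDiff ℝ 2 φ) (N : ℕ) (c : TaggedCube ι Y) :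
    ContDiff ℝ 2 (c.prefractal A φ r N) := by
  induction N generalizing c with
  | zero => exact c.contDiff_plane
  | succ N ih =>
    have hcoord (τ : ι → Fin 2) : ContDiff ℝ 2 (c.child A r τ).coord := by unfold coord; fun_prop
    exact c.contDiff_plane.add (ContDiff.sum fun τ _ =>
      (hφ.comp (hcoord τ)).smul ((ih _).sub c.contDiff_plane))

theorem prefractal_succ_eventuallyEq_child (hU : IsCellBump r U φ) (hc : 0 < c.side)
    (hx : (c.child A r τ).coord x ∈ U) (N : ℕ) :
    c.prefractal A φ r (N + 1) =ᶠ[𝓝 x] (c.child A r τ).prefractal A φ r N := by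
  filter_upwards [(continuous_coord _).continuousAt.preimage_mem_nhds (hU.isOpen.mem_nhds hx)]
    with x' hx'
  rw [prefractal, Finset.sum_eq_single τ, hU.eqOn_one hx', Pi.one_apply, one_smul, add_sub_cancel]
  · intro σ _ hne
    rw [mem_preimage, coord_child hc] at hx'
    rw [coord_child hc, hU.eq_zero_of_ne hne.symm hx', zero_smul]
  · exact fun h => (h (Finset.mem_univ τ)).elim

theorem prefractal_eventuallyEq_plane (hU : IsCellBump r U φ) (hc : 0 < c.side)
    (hx : c.coord x ∉ U) (N : ℕ) : c.prefractal A φ r N =ᶠ[𝓝 x] c.plane A := by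
  cases N with
  | zero => rfl
  | succ N =>
    have hzero (τ : ι → Fin 2) : ∀ᶠ x' in 𝓝 x, φ ((c.child A r τ).coord x') = 0 := by
      have := notMem_tsupport_iff_eventuallyEq.1 fun h => hx (hU.tsupport_comp_subset τ h)
      simpa only [coord_child hc, Function.comp_apply, Pi.zero_apply] using!
        (continuous_coord c).continuousAt.eventually this
    filter_upwards [eventually_all.2 hzero] with x' hx'
    simp only [prefractal, hx', zero_smul, Finset.sum_const_zero, add_zero]

theorem prefractal_succ_eventuallyEq_child_or_one (hU : IsCellBump r U φ) (hr : 0 < r)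
    (hc : 0 < c.side) (x : ι → ℝ) :
    (∃ τ, ∀ N, c.prefractal A φ r (N + 1) =ᶠ[𝓝 x] (c.child A r τ).prefractal A φ r N) ∨
      ∀ N, c.prefractal A φ r (N + 1) =ᶠ[𝓝 x] c.prefractal A φ r 1 := by
  by_cases h : ∃ τ, (c.child A r τ).coord x ∈ U
  · obtain ⟨τ, hτ⟩ := h
    exact Or.inl ⟨τ, prefractal_succ_eventuallyEq_child hU hc hτ⟩
  · push Not at h
    refine Or.inr fun N => ?_
    filter_upwards [eventually_all.2 fun τ =>
      prefractal_eventuallyEq_plane (A := A) hU (side_child_pos hr hc) (h τ) N] with x' hx'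
    simp only [prefractal, hx']

theorem prefractal_corner (hU : IsCellBump r U φ) (hr : 0 < r) (hc : 0 < c.side) (N : ℕ) :
    c.prefractal A φ r N c.corner = c.value := by
  induction N generalizing c with
  | zero => exact plane_corner c
  | succ N ih =>
    have hzero : cubeVertex (0 : ι → Fin 2) = 0 := funext fun _ => Nat.cast_zero
    have hcorner : (c.child A r 0).corner = c.corner := by
      rw [child, hzero, smul_zero, add_zero]
    have hvalue : (c.child A r 0).value = c.value := by
      rw [child, hzero, smul_zero, add_zero, plane_corner]
    have hmem : (c.child A r 0).coord c.corner ∈ U := by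
      rw [← hcorner, coord, sub_self, smul_zero]
      exact hU.Icc_subset ⟨le_rfl, zero_le_one⟩
    rw [(prefractal_succ_eventuallyEq_child hU hc hmem N).eq_of_nhds, ← hcorner,
      ih (side_child_pos hr hc), hvalue]

theorem prefractal_one (hr : 0 < r) (hc : 0 < c.side) (x : ι → ℝ) :
    c.prefractal A φ r 1 x = c.plane A x + ∑ τ, ((c.child A r τ).slope A - c.slope A)
      ((c.child A r τ).side • φ ((c.child A r τ).coord x) • (c.child A r τ).coord x) := by
  simp only [prefractal, plane_child_sub_plane]
  congr 2 with τ
  rw [smul_comm, map_smul, coord, smul_inv_smul₀ (side_child_pos hr hc).ne']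

theorem hasFDerivAt_prefractal_one (hr : 0 < r) (hc : 0 < c.side) (hφ : Differentiable ℝ φ)
    (x : ι → ℝ) :
    HasFDerivAt (c.prefractal A φ r 1) (c.slope A + ∑ τ, ((c.child A r τ).slope A - c.slope A) ∘L
      fderiv ℝ (fun z => φ z • z) ((c.child A r τ).coord x)) x := by
  rw [funext (prefractal_one hr hc)]
  refine (c.hasFDerivAt_plane x).add (HasFDerivAt.fun_sum fun τ _ =>
    (ContinuousLinearMap.hasFDerivAt _).comp x ?_)
  exact hasFDerivAt_side_smul_comp_coord (g := fun z => φ z • z) (side_child_pos hr hc).ne'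
    (hφ.smul differentiable_id _)

/-- The constant in the derivative bounds for the prefractals: `L` and `a` are the Lipschitz
constant and the bound of the slope field, `C` controls the cutoff. -/
def gluingBound (ι : Type*) [Fintype ι] [DecidableEq ι] (L a C : ℝ≥0) : ℝ≥0 :=
  Fintype.card (ι → Fin 2) * (L * (1 + a) * C)

variable {C : ℝ≥0}

theorem norm_fderiv_prefractal_one_sub_slope_le (hr : 0 < r) (hr1 : r ≤ 1)
    (hA : LipschitzWith L A) (ha : ∀ z, ‖A z‖ ≤ a) (hφ : Differentiable ℝ φ)
    (hC : LipschitzWith C fun z => φ z • z) (hc : 0 < c.side) (x : ι → ℝ) :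
    ‖fderiv ℝ (c.prefractal A φ r 1) x - c.slope A‖ ≤ gluingBound ι L a C * c.side := by
  rw [(hasFDerivAt_prefractal_one hr hc hφ x).fderiv, add_sub_cancel_left]
  refine (norm_sum_le_of_le _ fun τ _ => ?_ :
    _ ≤ ∑ _τ : ι → Fin 2, L * ((1 + a) * c.side) * (C : ℝ)).trans_eq ?_
  · exact (ContinuousLinearMap.opNorm_comp_le _ _).trans (mul_le_mul
      (norm_slope_child_sub_slope_le hr.le hr1 hA ha hc.le τ) (norm_fderiv_le_of_lipschitz ℝ hC)
      (norm_nonneg _) (by positivity))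
  · rw [Finset.sum_const, nsmul_eq_mul, Finset.card_univ, gluingBound]
    push_cast
    ring

theorem lipschitzWith_fderiv_prefractal_one (hr : 0 < r) (hr1 : r ≤ 1) (hA : LipschitzWith L A)
    (ha : ∀ z, ‖A z‖ ≤ a) (hφ : Differentiable ℝ φ)
    (hC : LipschitzWith C (fderiv ℝ fun z => φ z • z)) (hc : 0 < c.side) :
    LipschitzWith (gluingBound ι L a C / r.toNNReal) (fderiv ℝ (c.prefractal A φ r 1)) := by
  have hside := hc.ne'
  refine LipschitzWith.of_dist_le_mul fun x y => ?_
  rw [(hasFDerivAt_prefractal_one hr hc hφ x).fderiv,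
    (hasFDerivAt_prefractal_one hr hc hφ y).fderiv, dist_add_left]
  refine (dist_sum_sum_le_of_le _ fun τ _ => ?_ :
    _ ≤ ∑ _τ : ι → Fin 2, L * ((1 + a) * c.side) * (C * ((r * c.side)⁻¹ * dist x y))).trans_eq ?_
  · rw [dist_eq_norm, ← ContinuousLinearMap.comp_sub]
    refine (ContinuousLinearMap.opNorm_comp_le _ _).trans (mul_le_mul
      (norm_slope_child_sub_slope_le hr.le hr1 hA ha hc.le τ) ?_ (norm_nonneg _) (by positivity))
    refine (hC.norm_sub_le _ _).trans_eq ?_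
    rw [← dist_eq_norm, coord, coord, dist_smul₀, dist_sub_right,
      Real.norm_of_nonneg (inv_nonneg.2 (side_child_pos hr hc).le), child]
  · rw [Finset.sum_const, nsmul_eq_mul, Finset.card_univ, gluingBound, NNReal.coe_div,
      Real.coe_toNNReal _ hr.le]
    push_cast
    field_simp

theorem norm_fderiv_prefractal_succ_sub_le (hU : IsCellBump r U φ) (hr : 0 < r) (hr1 : r ≤ 1)
    (hA : LipschitzWith L A) (ha : ∀ z, ‖A z‖ ≤ a) (hC : LipschitzWith C fun z => φ z • z)
    (hc : 0 < c.side) (N : ℕ) (x : ι → ℝ) :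
    ‖fderiv ℝ (c.prefractal A φ r (N + 1)) x - fderiv ℝ (c.prefractal A φ r N) x‖ ≤
      gluingBound ι L a C * c.side * r ^ N := by
  induction N generalizing c with
  | zero =>
    have hzero : c.prefractal A φ r 0 = c.plane A := rfl
    rw [zero_add, hzero, (c.hasFDerivAt_plane x).fderiv, pow_zero, mul_one]
    exact norm_fderiv_prefractal_one_sub_slope_le hr hr1 hA ha
      (hU.contDiff.differentiable two_ne_zero) hC hc x
  | succ N ih =>
    rcases prefractal_succ_eventuallyEq_child_or_one hU hr hc x with ⟨τ, hτ⟩ | hone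
    · rw [(hτ (N + 1)).fderiv_eq, (hτ N).fderiv_eq]
      refine (ih (side_child_pos hr hc)).trans_eq ?_
      rw [child]
      ring
    · rw [(hone (N + 1)).fderiv_eq, (hone N).fderiv_eq, sub_self, norm_zero]
      positivity

theorem lipschitzWith_fderiv_prefractal (hU : IsCellBump r U φ) (hr : 0 < r) (hr1 : r ≤ 1)
    (hA : LipschitzWith L A) (ha : ∀ z, ‖A z‖ ≤ a)
    (hC : LipschitzWith C (fderiv ℝ fun z => φ z • z)) (hc : 0 < c.side) (N : ℕ) :
    LipschitzWith (gluingBound ι L a C / r.toNNReal) (fderiv ℝ (c.prefractal A φ r N)) := by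
  have hdiff : Differentiable ℝ (fderiv ℝ (c.prefractal A φ r N)) :=
    ((c.contDiff_prefractal hU.contDiff N).fderiv_right (m := 1) (by norm_num)).differentiable
      one_ne_zero
  refine lipschitzWith_of_nnnorm_fderiv_le hdiff fun x => ?_
  clear hdiff
  induction N generalizing c with
  | zero =>
    have hzero : fderiv ℝ (c.prefractal A φ r 0) = fun _ => c.slope A :=
      funext fun x => (c.hasFDerivAt_plane x).fderiv
    simp [hzero]
  | succ N ih =>
    rcases prefractal_succ_eventuallyEq_child_or_one hU hr hc x with ⟨τ, hτ⟩ | hone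
    · rw [(hτ N).fderiv.fderiv_eq]
      exact ih (side_child_pos hr hc)
    · rw [(hone N).fderiv.fderiv_eq]
      exact norm_fderiv_le_of_lipschitz ℝ (lipschitzWith_fderiv_prefractal_one hr hr1 hA ha
        (hU.contDiff.differentiable two_ne_zero) hC hc)

theorem norm_fderiv_prefractal_sub_map_le (hU : IsCellBump r U φ) (hr : 0 < r) (hr1 : r < 1)
    (hA : LipschitzWith L A) (ha : ∀ z, ‖A z‖ ≤ a) (hc : 0 < c.side)
    (hx : c.coord x ∈ cantorCube ι r) (N : ℕ) :
    ‖fderiv ℝ (c.prefractal A φ r N) x - A (x, c.prefractal A φ r N x)‖ ≤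
      L * ((1 + a) * c.side) * r ^ N := by
  induction N generalizing c with
  | zero =>
    have hzero : c.prefractal A φ r 0 = c.plane A := rfl
    rw [hzero, (c.hasFDerivAt_plane x).fderiv, norm_sub_rev, pow_zero, mul_one]
    refine (norm_map_sub_slope_le hA ha c x).trans ?_
    gcongr
    rw [← smul_inv_smul₀ hc.ne' (x - c.corner), norm_smul, Real.norm_of_nonneg hc.le]
    exact mul_le_of_le_one_right hc.le (norm_le_one_of_mem_cantorCube hr.le hr1 hx)
  | succ N ih =>
    obtain ⟨τ, z, hz, hzx⟩ := exists_eq_of_mem_cantorCube hr.le hr1 hx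
    have hchild : (c.child A r τ).coord x = z := by
      rw [coord_child hc, hzx, childCoord, add_sub_cancel_left, inv_smul_smul₀ hr.ne']
    have heq := prefractal_succ_eventuallyEq_child (A := A) (τ := τ) (x := x) hU hc
      (hchild ▸ hU.Icc_subset (cantorCube_subset_Icc hr.le hr1 hz)) N
    rw [heq.fderiv_eq, heq.eq_of_nhds]
    refine (ih (side_child_pos hr hc) (hchild ▸ hz)).trans_eq ?_
    rw [child]
    ring

end TaggedCube

end Prefractal

section Limit

theorem tendstoUniformly_of_dist_le_geometric {X Y : Type*} [PseudoMetricSpace Y] {f : ℕ → X → Y}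
    {g : X → Y} {r T : ℝ} (hr : 0 ≤ r) (hr1 : r < 1)
    (hf : ∀ N x, dist (f N x) (f (N + 1) x) ≤ T * r ^ N)
    (hg : ∀ x, Tendsto (f · x) atTop (𝓝 (g x))) : TendstoUniformly f g atTop := by
  refine Metric.tendstoUniformly_iff.2 fun ε hε => ?_
  have hlim : Tendsto (fun N => T * r ^ N / (1 - r)) atTop (𝓝 0) := by
    simpa using ((tendsto_pow_atTop_nhds_zero_of_lt_one hr hr1).const_mul T).div_const (1 - r)
  filter_upwards [hlim.eventually_lt_const hε] with N hN x
  rw [dist_comm]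
  exact (dist_le_of_le_geometric_of_tendsto r T hr1 (hf · x) (hg x) N).trans_lt hN

theorem norm_le_norm_add_div_of_dist_le_geometric {Y : Type*} [SeminormedAddCommGroup Y] {u : ℕ → Y}
    {v : Y} {r T : ℝ} (hr1 : r < 1) (hu : ∀ N, dist (u N) (u (N + 1)) ≤ T * r ^ N)
    (hv : Tendsto u atTop (𝓝 v)) : ‖v‖ ≤ ‖u 0‖ + T / (1 - r) := by
  have hdist := dist_le_of_le_geometric_of_tendsto₀ r T hr1 hu hv
  rw [dist_comm, dist_eq_norm] at hdist
  exact (norm_le_norm_add_norm_sub' v (u 0)).trans (add_le_add_right hdist _)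

variable {E Y : Type*} [NormedAddCommGroup E] [NormedSpace ℝ E] [NormedAddCommGroup Y]
  [NormedSpace ℝ Y]

theorem exists_lipschitzWith_fderiv_of_hasCompactSupport {g : E → Y} (hg : ContDiff ℝ 2 g)
    (hcs : HasCompactSupport g) : ∃ C, LipschitzWith C g ∧ LipschitzWith C (fderiv ℝ g) := by
  obtain ⟨C₀, hC₀⟩ := hg.lipschitzWith_of_hasCompactSupport hcs two_ne_zero
  obtain ⟨C₁, hC₁⟩ := (hg.fderiv_right (m := 1) (by norm_num)).lipschitzWith_of_hasCompactSupport
    (hcs.fderiv ℝ) one_ne_zero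
  exact ⟨max C₀ C₁, hC₀.weaken (le_max_left _ _), hC₁.weaken (le_max_right _ _)⟩

theorem exists_tendsto_of_norm_fderiv_sub_le_geometric [CompleteSpace Y] {f : ℕ → E → Y} {r T : ℝ}
    {x₀ : E} {y₀ : Y} (hr : 0 ≤ r) (hr1 : r < 1) (hf : ∀ N, Differentiable ℝ (f N))
    (hstep : ∀ N x, ‖fderiv ℝ (f (N + 1)) x - fderiv ℝ (f N) x‖ ≤ T * r ^ N)
    (hx₀ : ∀ N, f N x₀ = y₀) :
    ∃ F : E → Y, Differentiable ℝ F ∧ (∀ x, Tendsto (f · x) atTop (𝓝 (F x))) ∧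
      ∀ x, Tendsto (fun N => fderiv ℝ (f N) x) atTop (𝓝 (fderiv ℝ F x)) := by
  have hdist (N x) : dist (fderiv ℝ (f N) x) (fderiv ℝ (f (N + 1)) x) ≤ T * r ^ N := by
    rw [dist_comm, dist_eq_norm]
    exact hstep N x
  have hval (x N) : dist (f N x) (f (N + 1) x) ≤ T * ‖x - x₀‖ * r ^ N := by
    have := convex_univ.norm_image_sub_le_of_norm_fderiv_le (𝕜 := ℝ) (f := f (N + 1) - f N)
      (C := T * r ^ N) (fun z _ => ((hf _).sub (hf _)).differentiableAt)
      (fun z _ => (fderiv_sub (hf _ z) (hf _ z)).symm ▸ hstep N z) (mem_univ x₀) (mem_univ x)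
    rw [dist_comm, dist_eq_norm, mul_right_comm]
    simpa [hx₀] using this
  choose F hF using fun x =>
    cauchySeq_tendsto_of_complete (cauchySeq_of_le_geometric r _ hr1 (hval x))
  choose F' hF' using fun x =>
    cauchySeq_tendsto_of_complete (cauchySeq_of_le_geometric r T hr1 (hdist · x))
  have hderiv (x : E) : HasFDerivAt F (F' x) x :=
    hasFDerivAt_of_tendstoUniformly (tendstoUniformly_of_dist_le_geometric hr hr1 hdist hF')
      (fun N x => (hf N x).hasFDerivAt) hF x
  exact ⟨F, fun x => (hderiv x).differentiableAt, hF, fun x => (hderiv x).fderiv ▸ hF' x⟩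

/-- The projection to `E` of the set where the graph of `F` is tangent to the plane field on `E × Y`
with slopes `A`. -/
def contactSet (A : E × Y → E →L[ℝ] Y) (F : E → Y) : Set E := {x | fderiv ℝ F x = A (x, F x)}

theorem mem_contactSet_of_tendsto {A : E × Y → E →L[ℝ] Y} {f : ℕ → E → Y} {F : E → Y} {x : E}
    (hA : Continuous A) (hf : Tendsto (f · x) atTop (𝓝 (F x)))
    (hf' : Tendsto (fun N => fderiv ℝ (f N) x) atTop (𝓝 (fderiv ℝ F x)))
    (hdefect : Tendsto (fun N => fderiv ℝ (f N) x - A (x, f N x)) atTop (𝓝 0)) :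
    x ∈ contactSet A F :=
  sub_eq_zero.1 <| tendsto_nhds_unique
    (hf'.sub ((hA.tendsto _).comp (tendsto_const_nhds.prodMk_nhds hf))) hdefect

theorem exists_cantorCube_subset_contactSet (ι : Type*) [Fintype ι] [CompleteSpace Y] {r : ℝ}
    (hr : 0 < r) (hr2 : r < 1 / 2) (L a : ℝ≥0) :
    ∃ M : ℝ≥0, ∀ A : (ι → ℝ) × Y → (ι → ℝ) →L[ℝ] Y, LipschitzWith L A → (∀ z, ‖A z‖ ≤ a) →
      ∃ F : (ι → ℝ) → Y, Differentiable ℝ F ∧ LipschitzWith M F ∧ LipschitzWith M (fderiv ℝ F) ∧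
        F 0 = 0 ∧ cantorCube ι r ⊆ contactSet A F := by
  classical
  have hr1 : r < 1 := by linarith
  obtain ⟨U, φ, hU⟩ := exists_isCellBump ι hr hr2
  obtain ⟨C, hC, hC'⟩ := exists_lipschitzWith_fderiv_of_hasCompactSupport
    (hU.contDiff.smul contDiff_id) (hU.hasCompactSupport.smul_right (f' := id))
  set T := TaggedCube.gluingBound ι L a C with hT
  refine ⟨a + T / (1 - r).toNNReal + T / r.toNNReal, fun A hA ha => ?_⟩
  let c : TaggedCube ι Y := ⟨1, 0, 0⟩
  have hc : 0 < c.side := zero_lt_one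
  have hstep (N x) : ‖fderiv ℝ (c.prefractal A φ r (N + 1)) x - fderiv ℝ (c.prefractal A φ r N) x‖ ≤
      T * r ^ N := by
    simpa [c, hT] using TaggedCube.norm_fderiv_prefractal_succ_sub_le hU hr hr1.le hA ha hC hc N x
  have horigin (N : ℕ) : c.prefractal A φ r N 0 = 0 := TaggedCube.prefractal_corner hU hr hc N
  obtain ⟨F, hF, hlim, hlim'⟩ := exists_tendsto_of_norm_fderiv_sub_le_geometric hr.le hr1
    (fun N => (c.contDiff_prefractal hU.contDiff N).differentiable two_ne_zero) hstep horigin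
  refine ⟨F, hF, lipschitzWith_of_nnnorm_fderiv_le hF fun x => ?_, ?_,
    tendsto_nhds_unique (hlim 0) (by simp only [horigin, tendsto_const_nhds]), fun x hx => ?_⟩
  · have hslope : ‖fderiv ℝ (c.prefractal A φ r 0) x‖ ≤ a :=
      (c.hasFDerivAt_plane x).fderiv.symm ▸ ha _
    have hle := norm_le_norm_add_div_of_dist_le_geometric hr1
      (fun N => by rw [dist_comm, dist_eq_norm]; exact hstep N x) (hlim' x)
    refine (NNReal.coe_le_coe.1 (hle.trans ?_)).trans le_self_add
    rw [NNReal.coe_add, NNReal.coe_div, Real.coe_toNNReal _ (sub_pos.2 hr1).le]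
    exact add_le_add_left hslope _
  · have hmem : fderiv ℝ F ∈ {f | LipschitzWith (T / r.toNNReal) f} :=
      (isClosed_setOfPred_lipschitzWith _).mem_of_tendsto (tendsto_pi_nhds.2 hlim') <| .of_forall
        fun N => TaggedCube.lipschitzWith_fderiv_prefractal hU hr hr1.le hA ha hC' hc N
    exact LipschitzWith.weaken hmem le_add_self
  · refine mem_contactSet_of_tendsto hA.continuous (hlim x) (hlim' x) (squeeze_zero_norm
      (TaggedCube.norm_fderiv_prefractal_sub_map_le hU hr hr1 hA ha hc
        (by simpa [c, TaggedCube.coord] using hx)) ?_)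
    simpa using (tendsto_pow_atTop_nhds_zero_of_lt_one hr.le hr1).const_mul _

end Limit

section Corrector

variable {ι Y : Type*} {C : Set ℝ} {ρ : ℝ}

/-- The distance to `C`, truncated at height `ρ` to make its primitive globally Lipschitz. -/
def truncatedInfDist (C : Set ℝ) (ρ t : ℝ) : ℝ := min (infDist t C) ρ

theorem lipschitzWith_truncatedInfDist (C : Set ℝ) (ρ : ℝ) :
    LipschitzWith 1 (truncatedInfDist C ρ) :=
  (lipschitz_infDist_pt C).min_const ρ

theorem abs_truncatedInfDist_le (C : Set ℝ) (hρ : 0 ≤ ρ) (t : ℝ) :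
    |truncatedInfDist C ρ t| ≤ ρ := by
  rw [truncatedInfDist, abs_of_nonneg (le_min infDist_nonneg hρ)]
  exact min_le_right _ _

theorem truncatedInfDist_of_mem (hρ : 0 ≤ ρ) {t : ℝ} (ht : t ∈ C) : truncatedInfDist C ρ t = 0 := by
  rw [truncatedInfDist, infDist_zero_of_mem ht, min_eq_left hρ]

theorem truncatedInfDist_eq_infDist (h0 : 0 ∈ C) {t : ℝ} (ht : |t| ≤ ρ) :
    truncatedInfDist C ρ t = infDist t C :=
  min_eq_left ((infDist_le_dist_of_mem h0).trans (by simpa using ht))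

variable [Fintype ι] [NormedAddCommGroup Y] [NormedSpace ℝ Y]

theorem norm_sum_smul_proj_le (c : ι → ℝ) :
    ‖∑ i, c i • ContinuousLinearMap.proj (R := ℝ) (φ := fun _ : ι => ℝ) i‖ ≤
      Fintype.card ι * ‖c‖ := by
  refine (norm_sum_le_of_le _ fun i _ => ?_ : _ ≤ ∑ _i : ι, ‖c‖).trans_eq (by simp)
  rw [norm_smul]
  refine (mul_le_of_le_one_right (norm_nonneg _) ?_).trans (norm_le_pi_norm c i)
  exact ContinuousLinearMap.opNorm_le_bound _ zero_le_one fun x => by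
    simpa using norm_le_pi_norm x i

/-- A function in direction `e` whose partial derivatives are the truncated distances of the
coordinates to `C`, so that its derivative vanishes on `C ^ ι`. -/
def distanceCorrector (C : Set ℝ) (ρ : ℝ) (e : Y) (x : ι → ℝ) : Y :=
  (∑ i, ∫ t in (0 : ℝ)..x i, truncatedInfDist C ρ t) • e

theorem distanceCorrector_zero (C : Set ℝ) (ρ : ℝ) (e : Y) :
    distanceCorrector C ρ e (0 : ι → ℝ) = 0 := by
  simp [distanceCorrector]

theorem hasFDerivAt_distanceCorrector (C : Set ℝ) (ρ : ℝ) (e : Y) (x : ι → ℝ) :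
    HasFDerivAt (distanceCorrector C ρ e)
      ((∑ i, truncatedInfDist C ρ (x i) •
        ContinuousLinearMap.proj (R := ℝ) (φ := fun _ : ι => ℝ) i).smulRight e) x := by
  refine (HasFDerivAt.fun_sum fun i _ => ?_).smul_const e
  exact ((lipschitzWith_truncatedInfDist C ρ).continuous.integral_hasStrictDerivAt 0
    (x i)).hasDerivAt.comp_hasFDerivAt x
    (ContinuousLinearMap.proj (R := ℝ) (φ := fun _ : ι => ℝ) i).hasFDerivAt

theorem differentiable_distanceCorrector (C : Set ℝ) (ρ : ℝ) (e : Y) :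
    Differentiable ℝ (distanceCorrector (ι := ι) C ρ e) :=
  fun x => (hasFDerivAt_distanceCorrector C ρ e x).differentiableAt

theorem fderiv_distanceCorrector_single [DecidableEq ι] (C : Set ℝ) (ρ : ℝ) (e : Y) (x : ι → ℝ)
    (i : ι) :
    fderiv ℝ (distanceCorrector C ρ e) x (Pi.single i 1) = truncatedInfDist C ρ (x i) • e := by
  rw [(hasFDerivAt_distanceCorrector C ρ e x).fderiv]
  simp [Pi.single_apply]

theorem fderiv_distanceCorrector_of_mem (hρ : 0 ≤ ρ) (e : Y) {x : ι → ℝ} (hx : ∀ i, x i ∈ C) :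
    fderiv ℝ (distanceCorrector C ρ e) x = 0 := by
  rw [(hasFDerivAt_distanceCorrector C ρ e x).fderiv]
  simp [truncatedInfDist_of_mem hρ (hx _)]

theorem lipschitzWith_distanceCorrector (C : Set ℝ) (hρ : 0 ≤ ρ) {e : Y} (he : ρ * ‖e‖ ≤ 1) :
    LipschitzWith (Fintype.card ι) (distanceCorrector (ι := ι) C ρ e) := by
  refine lipschitzWith_of_nnnorm_fderiv_le (differentiable_distanceCorrector C ρ e) fun x => ?_
  rw [(hasFDerivAt_distanceCorrector C ρ e x).fderiv, ← NNReal.coe_le_coe, coe_nnnorm,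
    ContinuousLinearMap.norm_smulRight_apply, NNReal.coe_natCast]
  have hsup : ‖fun i => truncatedInfDist C ρ (x i)‖ ≤ ρ :=
    (pi_norm_le_iff_of_nonneg hρ).2 fun i => abs_truncatedInfDist_le C hρ (x i)
  calc _ ≤ Fintype.card ι * ‖fun i => truncatedInfDist C ρ (x i)‖ * ‖e‖ := by
        gcongr
        exact norm_sum_smul_proj_le _
    _ ≤ Fintype.card ι * (ρ * ‖e‖) := by
        rw [mul_assoc]
        gcongr
    _ ≤ Fintype.card ι := mul_le_of_le_one_right (Nat.cast_nonneg _) he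

theorem lipschitzWith_fderiv_distanceCorrector (C : Set ℝ) (ρ : ℝ) (e : Y) :
    LipschitzWith (Fintype.card ι * ‖e‖₊) (fderiv ℝ (distanceCorrector (ι := ι) C ρ e)) := by
  refine LipschitzWith.of_dist_le_mul fun x y => ?_
  have hsup : ‖fun i => truncatedInfDist C ρ (x i) - truncatedInfDist C ρ (y i)‖ ≤ dist x y := by
    refine (pi_norm_le_iff_of_nonneg dist_nonneg).2 fun i => ?_
    simpa only [NNReal.coe_one, one_mul, dist_eq_norm] using
      ((lipschitzWith_truncatedInfDist C ρ).dist_le_mul (x i) (y i)).trans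
        (mul_le_mul_of_nonneg_left (dist_le_pi_dist x y i) zero_le_one)
  have hsub (c c' : ι → ℝ) (π : ι → (ι → ℝ) →L[ℝ] ℝ) :
      (∑ i, c i • π i).smulRight e - (∑ i, c' i • π i).smulRight e =
        (∑ i, (c i - c' i) • π i).smulRight e := by
    ext
    simp [← sub_smul, ← Finset.sum_sub_distrib, sub_mul]
  rw [(hasFDerivAt_distanceCorrector C ρ e x).fderiv,
    (hasFDerivAt_distanceCorrector C ρ e y).fderiv, dist_eq_norm, hsub,
    ContinuousLinearMap.norm_smulRight_apply, NNReal.coe_mul, NNReal.coe_natCast, coe_nnnorm,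
    mul_right_comm]
  gcongr
  exact (norm_sum_smul_proj_le _).trans (by gcongr)

end Corrector

section LocalDimension

variable {X Y E : Type*}

/-- The set `s` has Hausdorff dimension `d` in every sufficiently small neighbourhood of `x`. -/
def HasLocalDimH [MetricSpace X] (s : Set X) (x : X) (d : ℝ≥0∞) : Prop :=
  (∃ U ∈ 𝓝 x, dimH (s ∩ U) ≤ d) ∧ ∀ U ∈ 𝓝 x, d ≤ dimH (s ∩ U)

theorem HasLocalDimH.exists_isOpen [MetricSpace X] {s : Set X} {x : X} {d : ℝ≥0∞}
    (h : HasLocalDimH s x d) {W : Set X} (hW : W ∈ 𝓝 x) :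
    ∃ U ⊆ W, IsOpen U ∧ x ∈ U ∧ dimH (s ∩ U) = d := by
  obtain ⟨⟨U, hU, hle⟩, hge⟩ := h
  obtain ⟨O, hO, hOo, hxO⟩ := _root_.mem_nhds_iff.1 (inter_mem hU hW)
  exact ⟨O, hO.trans inter_subset_right, hOo, hxO,
    ((dimH_mono (inter_subset_inter_right s (hO.trans inter_subset_left))).trans hle).antisymm
      (hge O (hOo.mem_nhds hxO))⟩

theorem hasLocalDimH_zero_of_notMem_closure [MetricSpace X] {s : Set X} {x : X}
    (hx : x ∉ closure s) : HasLocalDimH s x 0 := by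
  refine ⟨⟨(closure s)ᶜ, isClosed_closure.isOpen_compl.mem_nhds hx, ?_⟩, fun _ _ => zero_le⟩
  rw [(disjoint_compl_right.mono_left subset_closure).inter_eq, dimH_empty]

theorem HasLocalDimH.preimage [MetricSpace X] [MetricSpace Y] {s : Set Y} {x : X} {d : ℝ≥0∞}
    (e : X ≃ₜ Y) (he : ∀ t, dimH (e ⁻¹' t) = dimH t) (h : HasLocalDimH s (e x) d) :
    HasLocalDimH (e ⁻¹' s) x d := by
  have himage (U : Set X) : dimH (e ⁻¹' s ∩ U) = dimH (s ∩ e.symm ⁻¹' U) := by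
    rw [← he, preimage_inter, ← preimage_comp, e.symm_comp_self, preimage_id]
  obtain ⟨⟨U, hU, hle⟩, hge⟩ := h
  refine ⟨⟨e ⁻¹' U, e.continuous.continuousAt.preimage_mem_nhds hU, ?_⟩, fun U hU => ?_⟩
  · rwa [← preimage_inter, he]
  · rw [himage]
    refine hge _ (e.symm.continuous.continuousAt.preimage_mem_nhds ?_)
    rwa [e.symm_apply_apply]

theorem lipschitzWith_shear [SeminormedAddCommGroup E] [SeminormedAddCommGroup Y] {u : E → Y}
    {K : ℝ≥0} (hu : LipschitzWith K u) :
    LipschitzWith (1 + K) fun z : E × Y => (z.1, z.2 + u z.1) := by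
  refine (LipschitzWith.prod_fst.prodMk
    (LipschitzWith.prod_snd.add (hu.comp LipschitzWith.prod_fst))).weaken (max_le ?_ ?_)
  · exact le_self_add
  · rw [mul_one]

variable [NormedAddCommGroup E] [NormedSpace ℝ E] [NormedAddCommGroup Y] [NormedSpace ℝ Y]
  {A : E × Y → E →L[ℝ] Y} {F u : E → Y} {x : E}

theorem mem_contactSet_add_iff (hF : DifferentiableAt ℝ F x) (hu : DifferentiableAt ℝ u x) :
    x ∈ contactSet A (F + u) ↔ fderiv ℝ u x = A (x, F x + u x) - fderiv ℝ F x := by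
  rw [contactSet, mem_ofPred_eq, fderiv_add hF hu, Pi.add_apply, eq_sub_iff_add_eq']

theorem exists_hasLocalDimH_contactSet_zero [Nontrivial E] [Nontrivial Y] (hA : Continuous A) :
    ∃ F : E →L[ℝ] Y, HasLocalDimH (contactSet A F) 0 0 := by
  obtain ⟨B, hB⟩ := exists_ne (0 : E →L[ℝ] Y)
  set F := A 0 + B
  have hclosed : IsClosed (contactSet A F) := by
    simp only [contactSet, F.fderiv]
    exact isClosed_eq continuous_const (hA.comp (continuous_id.prodMk F.continuous))
  refine ⟨F, hasLocalDimH_zero_of_notMem_closure ?_⟩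
  rw [hclosed.closure_eq, contactSet, mem_ofPred_eq, F.fderiv, map_zero]
  exact fun h => hB (add_eq_left.1 h)

end LocalDimension

section Core

variable {ι Y : Type*} [Fintype ι] [NormedAddCommGroup Y] [NormedSpace ℝ Y]
  {A : (ι → ℝ) × Y → (ι → ℝ) →L[ℝ] Y} {F : (ι → ℝ) → Y} {C : Set ℝ} {ρ : ℝ} {e : Y}
  {L M K : ℝ≥0}

theorem lipschitzWith_defect (hA : LipschitzWith L A)
    (hu : LipschitzWith K (distanceCorrector (ι := ι) C ρ e)) (hF : LipschitzWith M F)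
    (hF' : LipschitzWith M (fderiv ℝ F)) :
    LipschitzWith (L * (1 + K) * max 1 M + M)
      fun x => A (x, F x + distanceCorrector C ρ e x) - fderiv ℝ F x :=
  ((hA.comp (lipschitzWith_shear hu)).comp (LipschitzWith.id.prodMk hF)).sub hF'

theorem abs_infDist_sub_le_of_mem_contactSet {κ : ℝ≥0} (h0 : 0 ∈ C) (hF : Differentiable ℝ F)
    (hdefect : LipschitzWith κ fun x => A (x, F x + distanceCorrector C ρ e x) - fderiv ℝ F x)
    {x x' : ι → ℝ} (hx : x ∈ contactSet A (F + distanceCorrector C ρ e) ∩ closedBall 0 ρ)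
    (hx' : x' ∈ contactSet A (F + distanceCorrector C ρ e) ∩ closedBall 0 ρ) (i : ι) :
    |infDist (x i) C - infDist (x' i) C| * ‖e‖ ≤ κ * dist x x' := by
  classical
  have hdist (y : ι → ℝ) (hy : y ∈ closedBall 0 ρ) :
      truncatedInfDist C ρ (y i) = infDist (y i) C :=
    truncatedInfDist_eq_infDist h0 ((norm_le_pi_norm y i).trans (mem_closedBall_zero_iff.1 hy))
  have hcontact (y : ι → ℝ) (hy : y ∈ contactSet A (F + distanceCorrector C ρ e)) :=
    (mem_contactSet_add_iff (hF y) (differentiable_distanceCorrector C ρ e y)).1 hy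
  have hle := hdefect.dist_le_mul x x'
  rw [← hcontact x hx.1, ← hcontact x' hx'.1, dist_eq_norm] at hle
  rw [← Real.norm_eq_abs, ← norm_smul, sub_smul, ← hdist x hx.2, ← hdist x' hx'.2,
    ← fderiv_distanceCorrector_single C ρ e x i, ← fderiv_distanceCorrector_single C ρ e x' i,
    ← sub_apply]
  refine (ContinuousLinearMap.le_of_opNorm_le _ hle _).trans (mul_le_of_le_one_right ?_ ?_)
  · positivity
  · simp [Pi.norm_single]

theorem pi_subset_contactSet_add_distanceCorrector (hρ : 0 ≤ ρ) (hF : Differentiable ℝ F)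
    (hsub : (univ.pi fun _ => C) ⊆
      contactSet (fun z => A (z.1, z.2 + distanceCorrector C ρ e z.1)) F) :
    (univ.pi fun _ => C) ⊆ contactSet A (F + distanceCorrector C ρ e) := fun x hx => by
  rw [mem_contactSet_add_iff (hF x) (differentiable_distanceCorrector C ρ e x),
    fderiv_distanceCorrector_of_mem hρ e fun i => hx i trivial, eq_comm, sub_eq_zero, eq_comm]
  exact hsub hx

theorem hasLocalDimH_contactSet_add_distanceCorrector {κ : ℝ≥0} {r : ℝ} (hr : 0 < r) (hr1 : r < 1)
    (he : 0 < ‖e‖) (hκe : 2 * κ ≤ ‖e‖) (hF : Differentiable ℝ F)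
    (hdefect : LipschitzWith κ fun x =>
      A (x, F x + distanceCorrector (ratioCantorSet r) ‖e‖⁻¹ e x) - fderiv ℝ F x)
    (hsub : cantorCube ι r ⊆ contactSet
      (fun z => A (z.1, z.2 + distanceCorrector (ratioCantorSet r) ‖e‖⁻¹ e z.1)) F) :
    HasLocalDimH (contactSet A (F + distanceCorrector (ratioCantorSet r) ‖e‖⁻¹ e)) 0
      (dimH (cantorCube ι r)) := by
  have hρ : 0 < ‖e‖⁻¹ := inv_pos.2 he
  refine ⟨⟨closedBall 0 ‖e‖⁻¹, closedBall_mem_nhds 0 hρ, ?_⟩, fun U hU => ?_⟩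
  · refine dimH_le_dimH_pi_of_abs_infDist_sub_le (isCompact_ratioCantorSet hr.le hr1).isClosed
      ⟨0, zero_mem_ratioCantorSet r⟩ one_half_lt_one fun x hx x' hx' i => ?_
    have hle := abs_infDist_sub_le_of_mem_contactSet (zero_mem_ratioCantorSet r) hF hdefect hx hx' i
    refine le_of_mul_le_mul_right (hle.trans ?_) he
    nlinarith [dist_nonneg (x := x) (y := x')]
  · exact (dimH_cantorCube_le_dimH_inter hr hr1 hU).trans (dimH_mono (inter_subset_inter_left U
      (pi_subset_contactSet_add_distanceCorrector hρ.le hF hsub)))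

theorem exists_hasLocalDimH_contactSet_of_pos [CompleteSpace Y] [Nontrivial Y] {a : ℝ≥0}
    (hA : LipschitzWith L A) (ha : ∀ z, ‖A z‖ ≤ a) {d : ℝ} (hd : 0 < d)
    (hdk : d < Fintype.card ι) :
    ∃ F : (ι → ℝ) → Y, Differentiable ℝ F ∧ (∃ K, LipschitzWith K (fderiv ℝ F)) ∧ F 0 = 0 ∧
      HasLocalDimH (contactSet A F) 0 (ENNReal.ofReal d) := by
  have hcard : (0 : ℝ) < Fintype.card ι := hd.trans hdk
  obtain ⟨r, hr, hr2, hrs⟩ :=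
    exists_ratio_rpow_eq_half (div_pos hd hcard) ((div_lt_one hcard).2 hdk)
  have hdim : dimH (cantorCube ι r) = ENNReal.ofReal d := by
    rw [dimH_cantorCube hr hr2 (div_pos hd hcard) hrs, div_mul_cancel₀ _ hcard.ne']
  obtain ⟨M, hM⟩ := exists_cantorCube_subset_contactSet (Y := Y) ι hr hr2
    (L * (1 + Fintype.card ι)) a
  set κ : ℝ≥0 := L * (1 + Fintype.card ι) * max 1 M + M
  obtain ⟨e, he⟩ := exists_norm_eq Y (c := 2 * ((κ : ℝ) + 1)) (by positivity)
  have he0 : 0 < ‖e‖ := he ▸ by positivity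
  set C := ratioCantorSet r
  set u := distanceCorrector (ι := ι) C ‖e‖⁻¹ e
  have hu : Differentiable ℝ u := differentiable_distanceCorrector C _ e
  have huK : LipschitzWith (Fintype.card ι) u :=
    lipschitzWith_distanceCorrector C (inv_nonneg.2 he0.le) (inv_mul_cancel₀ he0.ne').le
  obtain ⟨F, hF, hFM, hF'M, hF0, hsub⟩ := hM (fun z => A (z.1, z.2 + u z.1))
    (hA.comp (lipschitzWith_shear huK)) fun z => ha _
  have hfderiv : fderiv ℝ (F + u) = fderiv ℝ F + fderiv ℝ u :=
    funext fun x => fderiv_add (hF x) (hu x)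
  refine ⟨F + u, hF.add hu, ⟨M + Fintype.card ι * ‖e‖₊, ?_⟩, ?_, ?_⟩
  · exact hfderiv ▸ hF'M.add (lipschitzWith_fderiv_distanceCorrector C _ e)
  · rw [Pi.add_apply, hF0, zero_add]
    exact distanceCorrector_zero C _ e
  · exact hdim ▸ hasLocalDimH_contactSet_add_distanceCorrector hr (by linarith) he0
      (by rw [he]; linarith) hF (lipschitzWith_defect hA huK hFM hF'M) hsub

theorem exists_hasLocalDimH_contactSet_pi [CompleteSpace Y] [Nontrivial Y] {a : ℝ≥0}
    (hA : LipschitzWith L A) (ha : ∀ z, ‖A z‖ ≤ a) {d : ℝ} (hd : 0 ≤ d)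
    (hdk : d < Fintype.card ι) :
    ∃ F : (ι → ℝ) → Y, Differentiable ℝ F ∧ (∃ K, LipschitzWith K (fderiv ℝ F)) ∧ F 0 = 0 ∧
      HasLocalDimH (contactSet A F) 0 (ENNReal.ofReal d) := by
  rcases hd.eq_or_lt with rfl | hpos
  · have : Nonempty ι := Fintype.card_pos_iff.1 (by exact_mod_cast hdk)
    obtain ⟨F, hF⟩ := exists_hasLocalDimH_contactSet_zero hA.continuous
    refine ⟨F, F.differentiable, ⟨0, ?_⟩, map_zero F, by rwa [ENNReal.ofReal_zero]⟩
    rw [show fderiv ℝ F = fun _ => F from funext fun _ => F.fderiv]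
    exact LipschitzWith.const F
  · exact exists_hasLocalDimH_contactSet_of_pos hA ha hpos hdk

end Core

section Transfer

variable {E G Y : Type*} [NormedAddCommGroup E] [NormedSpace ℝ E] [NormedAddCommGroup G]
  [NormedSpace ℝ G] [NormedAddCommGroup Y] [NormedSpace ℝ Y] {A : E × Y → E →L[ℝ] Y}

theorem fderiv_add_comp_sub (Φ : E ≃L[ℝ] G) (x₀ : E) (y₀ : Y) {F : G → Y}
    (hF : Differentiable ℝ F) :
    fderiv ℝ (fun x => y₀ + F (Φ (x - x₀))) =
      fun x => ContinuousLinearMap.precomp Y (Φ : E →L[ℝ] G) (fderiv ℝ F (Φ (x - x₀))) :=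
  funext fun x => (((hF _).hasFDerivAt.comp x
    (Φ.hasFDerivAt.comp x ((hasFDerivAt_id x).sub_const x₀))).const_add y₀).fderiv

theorem contactSet_add_comp_sub (Φ : E ≃L[ℝ] G) (x₀ : E) (y₀ : Y) {F : G → Y}
    (hF : Differentiable ℝ F) :
    contactSet A (fun x => y₀ + F (Φ (x - x₀))) = (fun x => Φ (x - x₀)) ⁻¹' contactSet
      (fun z => ContinuousLinearMap.precomp Y (Φ.symm : G →L[ℝ] E)
        (A (x₀ + Φ.symm z.1, y₀ + z.2))) F := by
  ext x
  simp only [contactSet, fderiv_add_comp_sub Φ x₀ y₀ hF, mem_preimage, mem_ofPred_eq,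
    Φ.symm_apply_apply, add_sub_cancel]
  exact (Φ.eq_comp_toContinuousLinearMap_symm _ _).symm

theorem dimH_preimage_comp_sub (Φ : E ≃L[ℝ] G) (x₀ : E) (t : Set G) :
    dimH ((fun x => Φ (x - x₀)) ⁻¹' t) = dimH t :=
  ((IsometryEquiv.subRight x₀).dimH_preimage (Φ ⁻¹' t)).trans (Φ.dimH_preimage t)

theorem exists_hasLocalDimH_contactSet [FiniteDimensional ℝ E] [CompleteSpace Y] [Nontrivial Y]
    {L a : ℝ≥0} (hA : LipschitzWith L A) (ha : ∀ z, ‖A z‖ ≤ a) (x₀ : E) (y₀ : Y) {d : ℝ}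
    (hd : 0 ≤ d) (hdk : d < finrank ℝ E) :
    ∃ F : E → Y, Differentiable ℝ F ∧ (∃ K, LipschitzWith K (fderiv ℝ F)) ∧ F x₀ = y₀ ∧
      HasLocalDimH (contactSet A F) x₀ (ENNReal.ofReal d) := by
  let Φ : E ≃L[ℝ] (Fin (finrank ℝ E) → ℝ) := ContinuousLinearEquiv.ofFinrankEq (by simp)
  let Ψ : (E →L[ℝ] Y) →L[ℝ] (Fin (finrank ℝ E) → ℝ) →L[ℝ] Y :=
    ContinuousLinearMap.precomp Y (Φ.symm : (Fin (finrank ℝ E) → ℝ) →L[ℝ] E)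
  have hshift := ((LipschitzWith.const x₀).add
    (Φ.symm.lipschitz.comp LipschitzWith.prod_fst)).prodMk
    ((LipschitzWith.const y₀).add LipschitzWith.prod_snd)
  obtain ⟨F, hF, ⟨K, hK⟩, hF0, hdim⟩ := exists_hasLocalDimH_contactSet_pi
    (A := fun z => Ψ (A (x₀ + Φ.symm z.1, y₀ + z.2))) (a := ‖Ψ‖₊ * a)
    (Ψ.lipschitz.comp (hA.comp hshift))
    (fun z => Ψ.le_opNorm_of_le (ha _)) hd (by rwa [Fintype.card_fin])
  refine ⟨fun x => y₀ + F (Φ (x - x₀)), ?_, ?_, ?_, ?_⟩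
  · exact (hF.comp (Φ.differentiable.comp (differentiable_id.sub_const x₀))).const_add y₀
  · rw [fderiv_add_comp_sub Φ x₀ y₀ hF]
    exact ⟨_, (ContinuousLinearMap.lipschitz _).comp
      (hK.comp (Φ.lipschitz.comp (IsometryEquiv.subRight x₀).isometry.lipschitz))⟩
  · simp [hF0]
  · rw [contactSet_add_comp_sub Φ x₀ y₀ hF]
    have hzero : (Homeomorph.subRight x₀).trans Φ.toHomeomorph x₀ = 0 := by simp
    exact HasLocalDimH.preimage _ (dimH_preimage_comp_sub Φ x₀) (hzero ▸ hdim)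

end Transfer

section Graph

variable {W : Submodule ℝ (Euc n)} {f : W → Wᗮ} {z : W} {U : Set W}

theorem orthogonalProjectionOnto_graphMap (f : W → Wᗮ) (z : W) :
    W.orthogonalProjectionOnto (graphMap W f z) = z := by
  rw [graphMap, map_add, Submodule.orthogonalProjectionOnto_mem_subspace_eq_self,
    Submodule.orthogonalProjectionOnto_apply_of_mem_orthogonal (f z).2, add_zero]

theorem orthogonalProjectionOnto_orthogonal_graphMap (f : W → Wᗮ) (z : W) :
    Wᗮ.orthogonalProjectionOnto (graphMap W f z) = f z := by
  rw [graphMap, map_add, Submodule.orthogonalProjectionOnto_mem_subspace_eq_self,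
    Submodule.orthogonalProjectionOnto_apply_of_mem_orthogonal
      (W.le_orthogonal_orthogonal z.2), zero_add]

theorem graphMap_orthogonalProjectionOnto {v : Euc n}
    (h : f (W.orthogonalProjectionOnto v) = Wᗮ.orthogonalProjectionOnto v) :
    graphMap W f (W.orthogonalProjectionOnto v) = v := by
  rw [graphMap, h]
  exact W.starProjection_add_starProjection_orthogonal v

theorem range_graphMap_injective :
    Function.Injective fun f : W → Wᗮ => range (graphMap W f) := fun f g h => by
  funext z
  obtain ⟨w, hw⟩ := (h ▸ mem_range_self z : graphMap W f z ∈ (fun g => range (graphMap W g)) g)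
  have hwz : w = z := by
    rw [← orthogonalProjectionOnto_graphMap g w, hw, orthogonalProjectionOnto_graphMap]
  rw [← orthogonalProjectionOnto_orthogonal_graphMap f z, ← hw, hwz,
    orthogonalProjectionOnto_orthogonal_graphMap]

theorem hasFDerivAt_graphMap {R : W →L[ℝ] Wᗮ} (hf : HasFDerivAt f R z) :
    HasFDerivAt (graphMap W f) (W.subtypeL + Wᗮ.subtypeL ∘L R) z :=
  W.subtypeL.hasFDerivAt.add (Wᗮ.subtypeL.hasFDerivAt.comp z hf)

theorem tangentConeAt_graphMap_image {R : W →L[ℝ] Wᗮ} (hf : HasFDerivAt f R z) (hU : U ∈ 𝓝 z) :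
    tangentConeAt ℝ (graphMap W f '' U) (graphMap W f z) = range (graphMap W R) := by
  set P := W.orthogonalProjectionOnto
  set Q := Wᗮ.orthogonalProjectionOnto
  apply Subset.antisymm
  · intro v hv
    have hdefect : HasFDerivAt (fun x => Q x - f (P x)) (Q - R ∘L P) (graphMap W f z) :=
      Q.hasFDerivAt.sub (HasFDerivAt.comp _
        ((orthogonalProjectionOnto_graphMap f z).symm ▸ hf) P.hasFDerivAt)
    have hvanish (w : W) : Q (graphMap W f w) - f (P (graphMap W f w)) = 0 := by
      rw [orthogonalProjectionOnto_graphMap, orthogonalProjectionOnto_orthogonal_graphMap, sub_self]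
    have hconst : HasFDerivWithinAt (fun x => Q x - f (P x)) (0 : Euc n →L[ℝ] Wᗮ)
        (graphMap W f '' U) (graphMap W f z) :=
      (hasFDerivWithinAt_const 0 _ _).congr (forall_mem_image.2 fun w _ => hvanish w) (hvanish z)
    have hzero : Q v - (R ∘L P) v = 0 := hdefect.hasFDerivWithinAt.unique_on hconst hv
    exact ⟨P v, graphMap_orthogonalProjectionOnto (sub_eq_zero.1 hzero).symm⟩
  · rintro _ ⟨w, rfl⟩
    refine (hasFDerivAt_graphMap hf).hasFDerivWithinAt.mapsTo_tangent_cone ?_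
    exact tangentConeAt_of_mem_nhds (𝕜 := ℝ) hU ▸ mem_univ w

theorem tangencySet_graphMap_image {V : Euc n → Submodule ℝ (Euc n)} {A : Euc n → W →L[ℝ] Wᗮ}
    (hf : Differentiable ℝ f) (hU : IsOpen U)
    (hV : ∀ z ∈ U, (V (graphMap W f z) : Set (Euc n)) =
      range (graphMap W (A (graphMap W f z)))) :
    tangencySet (graphMap W f '' U) V =
      graphMap W f '' (contactSet (fun p : W × Wᗮ => A ((p.1 : Euc n) + p.2)) f ∩ U) := by
  have hmem (z : W) (hz : z ∈ U) : tangentConeAt ℝ (graphMap W f '' U) (graphMap W f z) =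
      (V (graphMap W f z) : Set (Euc n)) ↔
      z ∈ contactSet (fun p : W × Wᗮ => A ((p.1 : Euc n) + p.2)) f := by
    rw [tangentConeAt_graphMap_image (hf z).hasFDerivAt (hU.mem_nhds hz), hV z hz,
      range_graphMap_injective.eq_iff, DFunLike.coe_fn_eq]
    rfl
  ext x
  constructor
  · rintro ⟨⟨z, hz, rfl⟩, htangent⟩
    exact ⟨z, ⟨(hmem z hz).1 htangent, hz⟩, rfl⟩
  · rintro ⟨z, ⟨hcontact, hz⟩, rfl⟩
    exact ⟨mem_image_of_mem _ hz, (hmem z hz).2 hcontact⟩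

theorem isC11Submanifold_graphMap_image (hf : ContDiff ℝ 1 f) {K : ℝ≥0}
    (hK : LipschitzWith K (fderiv ℝ f)) (hU : IsOpen U) (hne : U.Nonempty) :
    IsC11Submanifold (finrank ℝ W) (graphMap W f '' U) :=
  ⟨hne.image _, fun _ _ => ⟨W, U, f, univ, rfl, hU, hf.contDiffOn, ⟨K, hK.lipschitzOnWith⟩,
    isOpen_univ, mem_univ _, rfl⟩⟩

theorem dimH_graphMap_image (hf : ContDiff ℝ 1 f) (T : Set W) :
    dimH (graphMap W f '' T) = dimH T := by
  have hgraph : ContDiff ℝ 1 (graphMap W f) :=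
    W.subtypeL.contDiff.add (Wᗮ.subtypeL.contDiff.comp hf)
  refine (hgraph.contDiffOn.dimH_image_le convex_univ (subset_univ T)).antisymm ?_
  have hinverse := W.orthogonalProjectionOnto.lipschitz.dimH_image_le (graphMap W f '' T)
  rw [image_image] at hinverse
  simpa only [orthogonalProjectionOnto_graphMap, image_id'] using hinverse

end Graph

section NormalForm

variable {k : ℕ} {V : Euc n → Submodule ℝ (Euc n)} {W : Submodule ℝ (Euc n)} {x₀ : Euc n}

/-- The slope over `W` of the range of `T`, meaningful only if the range is transverse to `Wᗮ`;
`ContinuousLinearMap.inverse` is zero otherwise. -/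
def slopeOver (W : Submodule ℝ (Euc n)) {G : Type*} [NormedAddCommGroup G] [NormedSpace ℝ G]
    (T : G →L[ℝ] Euc n) : W →L[ℝ] Wᗮ :=
  (Wᗮ.orthogonalProjectionOnto ∘L T) ∘L (W.orthogonalProjectionOnto ∘L T).inverse

variable {G : Type*} [NormedAddCommGroup G] [NormedSpace ℝ G] {T : G →L[ℝ] Euc n}

theorem range_graphMap_slopeOver (hT : (W.orthogonalProjectionOnto ∘L T).IsInvertible) :
    range (graphMap W (slopeOver W T)) = range T := by
  obtain ⟨Φ, hΦ⟩ := hT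
  have hfactor (c : G) : graphMap W (slopeOver W T) (Φ c) = T c := by
    have hΦc : Φ c = W.orthogonalProjectionOnto (T c) := DFunLike.congr_fun hΦ c
    rw [hΦc]
    refine graphMap_orthogonalProjectionOnto ?_
    rw [← hΦc, slopeOver, ← hΦ, ContinuousLinearMap.inverse_equiv]
    simp
  rw [← Φ.surjective.range_comp]
  exact congrArg range (funext hfactor)

theorem contDiffAt_slopeOver [CompleteSpace G]
    (hT : (W.orthogonalProjectionOnto ∘L T).IsInvertible) : ContDiffAt ℝ 1 (slopeOver W) T := by
  have hP : ContDiffAt ℝ 1 (fun T : G →L[ℝ] Euc n => W.orthogonalProjectionOnto ∘L T) T :=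
    contDiffAt_const.clm_comp contDiffAt_id
  exact (contDiffAt_const.clm_comp contDiffAt_id).clm_comp (hT.contDiffAt_map_inverse.comp T hP)

theorem isInvertible_orthogonalProjectionOnto_comp [FiniteDimensional ℝ G]
    (hG : finrank ℝ G = finrank ℝ W) (hT : range T = W) :
    (W.orthogonalProjectionOnto ∘L T).IsInvertible := by
  have hsurj : Function.Surjective (W.orthogonalProjectionOnto ∘L T) := fun w => by
    obtain ⟨c, hc⟩ : (w : Euc n) ∈ range T := hT ▸ w.2
    exact ⟨c, by simp [hc]⟩
  have hinj := (LinearMap.injective_iff_surjective_of_finrank_eq_finrank hG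
    (f := (W.orthogonalProjectionOnto ∘L T).toLinearMap)).2 hsurj
  exact ⟨(LinearEquiv.ofBijective _ ⟨hinj, hsurj⟩).toContinuousLinearEquiv, rfl⟩

theorem eventually_isInvertible [CompleteSpace G] {H : Type*} [NormedAddCommGroup H]
    [NormedSpace ℝ H] {B : G →L[ℝ] H} (hB : B.IsInvertible) : ∀ᶠ B' in 𝓝 B, B'.IsInvertible := by
  obtain ⟨Φ, rfl⟩ := hB
  exact Φ.nhds

theorem IsC1PlaneField.exists_contDiffAt_range_eq {Ω : Set (Euc n)} (hV : IsC1PlaneField k Ω V)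
    (hx₀ : x₀ ∈ Ω) :
    ∃ T : Euc n → (Fin k → ℝ) →L[ℝ] Euc n, ContDiffAt ℝ 1 T x₀ ∧
      ∀ᶠ y in 𝓝 x₀, range (T y) = V y := by
  obtain ⟨U, hU, hx₀U, -, X, hX, hspan⟩ := hV.2.2 x₀ hx₀
  refine ⟨fun y => ∑ i, (ContinuousLinearMap.proj i).smulRight (X i y), ?_, ?_⟩
  · exact ContDiffAt.sum fun i _ =>
      contDiffAt_const.smulRight ((hX i).contDiffAt (hU.mem_nhds hx₀U))
  · filter_upwards [hU.mem_nhds hx₀U] with y hy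
    ext v
    rw [hspan y hy, SetLike.mem_coe, Submodule.mem_span_range_iff_exists_fun]
    simp

theorem IsC1PlaneField.exists_contDiffAt_range_graphMap_eq {Ω : Set (Euc n)}
    (hV : IsC1PlaneField k Ω V) (hx₀ : x₀ ∈ Ω) :
    ∃ A : Euc n → V x₀ →L[ℝ] (V x₀)ᗮ, ContDiffAt ℝ 1 A x₀ ∧
      ∀ᶠ y in 𝓝 x₀, (V y : Set (Euc n)) = range (graphMap (V x₀) (A y)) := by
  obtain ⟨T, hT, hrange⟩ := hV.exists_contDiffAt_range_eq hx₀
  have hinv : ((V x₀).orthogonalProjectionOnto ∘L T x₀).IsInvertible :=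
    isInvertible_orthogonalProjectionOnto_comp (by simp [hV.2.1 x₀ hx₀]) hrange.self_of_nhds
  refine ⟨fun y => slopeOver (V x₀) (T y), (contDiffAt_slopeOver hinv).comp x₀ hT, ?_⟩
  have hcont : ContinuousAt (fun y => (V x₀).orthogonalProjectionOnto ∘L T y) x₀ :=
    continuousAt_const.clm_comp hT.continuousAt
  filter_upwards [hrange, hcont.eventually (eventually_isInvertible hinv)] with y hy hyinv
  rw [range_graphMap_slopeOver hyinv, hy]

end NormalForm

theorem exists_lipschitzWith_eventuallyEq_of_contDiffAt {E Z : Type*} [NormedAddCommGroup E]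
    [NormedSpace ℝ E] [FiniteDimensional ℝ E] [NormedAddCommGroup Z] [NormedSpace ℝ Z]
    {A : E → Z} {x₀ : E} (hA : ContDiffAt ℝ 1 A x₀) :
    ∃ (A₁ : E → Z) (L a : ℝ≥0), LipschitzWith L A₁ ∧ (∀ y, ‖A₁ y‖ ≤ a) ∧ A₁ =ᶠ[𝓝 x₀] A := by
  obtain ⟨ε, hε, hball⟩ := Metric.eventually_nhds_iff_ball.1 (hA.eventually (by simp))
  let χ : ContDiffBump x₀ := ⟨ε / 3, ε / 2, by positivity, by linarith⟩
  have hsupp : tsupport (fun y => χ y • A y) ⊆ ball x₀ ε := by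
    refine (tsupport_smul_subset_left _ _).trans ?_
    rw [χ.tsupport_eq]
    exact closedBall_subset_ball (half_lt_self hε)
  have hsmooth : ContDiff ℝ 1 fun y => χ y • A y := contDiff_iff_contDiffAt.2 fun y => by
    by_cases hy : y ∈ tsupport fun y => χ y • A y
    · exact χ.contDiff.contDiffAt.smul (hball y (hsupp hy))
    · exact (contDiffAt_const (c := (0 : Z))).congr_of_eventuallyEq
        (notMem_tsupport_iff_eventuallyEq.1 hy)
  have hcompact : HasCompactSupport fun y => χ y • A y := χ.hasCompactSupport.smul_right
  obtain ⟨L, hL⟩ := hsmooth.lipschitzWith_of_hasCompactSupport hcompact one_ne_zero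
  obtain ⟨a, ha⟩ := hcompact.exists_bound_of_continuous hsmooth.continuous
  refine ⟨_, L, a.toNNReal, hL, fun y => (ha y).trans a.le_coe_toNNReal, ?_⟩
  filter_upwards [χ.eventuallyEq_one] with y hy
  rw [hy, Pi.one_apply, one_smul]

theorem nontrivial_orthogonal_of_finrank_lt {W : Submodule ℝ (Euc n)} (hW : finrank ℝ W < n) :
    Nontrivial Wᗮ := by
  have hsum := W.finrank_add_finrank_orthogonal
  rw [finrank_euclideanSpace_fin] at hsum
  exact finrank_pos_iff.1 (by omega : 0 < finrank ℝ Wᗮ)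

theorem lipschitzWith_coe_add_coe {W W' : Submodule ℝ (Euc n)} :
    LipschitzWith 2 fun p : W × W' => (p.1 : Euc n) + p.2 := by
  have hadd := (LipschitzWith.subtype_val (W : Set (Euc n))).comp LipschitzWith.prod_fst |>.add
    ((LipschitzWith.subtype_val (W' : Set (Euc n))).comp LipschitzWith.prod_snd)
  exact hadd.weaken (by norm_num)

theorem statement0_general {n k : ℕ} (hkn : k < n) {Ω : Set (Euc n)}
    {V : Euc n → Submodule ℝ (Euc n)} (hV : IsC1PlaneField k Ω V) {x₀ : Euc n} (hx₀ : x₀ ∈ Ω)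
    {d : ℝ} (hd0 : 0 ≤ d) (hdk : d < k) :
    ∃ S : Set (Euc n), IsC11Submanifold k S ∧ x₀ ∈ S ∧ S ⊆ Ω ∧
      dimH (tangencySet S V) = ENNReal.ofReal d := by
  obtain ⟨A₀, hA₀, hVA₀⟩ := hV.exists_contDiffAt_range_graphMap_eq hx₀
  obtain ⟨A, L, a, hA, ha, hAA₀⟩ := exists_lipschitzWith_eventuallyEq_of_contDiffAt hA₀
  have hk : finrank ℝ (V x₀) = k := hV.2.1 x₀ hx₀
  have : Nontrivial (V x₀)ᗮ := nontrivial_orthogonal_of_finrank_lt (hk.trans_lt hkn)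
  set z₀ := (V x₀).orthogonalProjectionOnto x₀
  obtain ⟨f, hf, ⟨K, hK⟩, hfz₀, hdim⟩ := exists_hasLocalDimH_contactSet
    (A := fun p => A ((p.1 : Euc n) + p.2)) (hA.comp lipschitzWith_coe_add_coe) (fun _ => ha _)
    z₀ ((V x₀)ᗮ.orthogonalProjectionOnto x₀) hd0 (by rwa [hk])
  have hgraph : graphMap (V x₀) f z₀ = x₀ := graphMap_orthogonalProjectionOnto hfz₀
  have hnear : ∀ᶠ y in 𝓝 (graphMap (V x₀) f z₀),
      y ∈ Ω ∧ (V y : Set (Euc n)) = range (graphMap (V x₀) (A y)) := by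
    rw [hgraph]
    filter_upwards [hV.1.mem_nhds hx₀, hVA₀, hAA₀] with y hy hVy hAy
    exact ⟨hy, hAy ▸ hVy⟩
  have hcont : ContinuousAt (graphMap (V x₀) f) z₀ :=
    (hasFDerivAt_graphMap (hf z₀).hasFDerivAt).continuousAt
  obtain ⟨U, hUnear, hU, hz₀U, hdimU⟩ := hdim.exists_isOpen (hcont.eventually hnear)
  have hfC1 : ContDiff ℝ 1 f := contDiff_one_iff_fderiv.2 ⟨hf, hK.continuous⟩
  refine ⟨graphMap (V x₀) f '' U, hk ▸ isC11Submanifold_graphMap_image hfC1 hK hU ⟨z₀, hz₀U⟩,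
    ⟨z₀, hz₀U, hgraph⟩, image_subset_iff.2 fun z hz => (hUnear hz).1, ?_⟩
  rw [tangencySet_graphMap_image hf hU fun z hz => (hUnear hz).2, dimH_graphMap_image hfC1, hdimU]

/-- Let `2 ≤ k < n` and let `V` be a distribution of `k`-planes of class
`C¹` on `ℝⁿ`. Then for every `d ∈ [0, k)` there exists a `k`-dimensional embedded
submanifold `S ⊆ ℝⁿ` of class `C^{1,1}` whose tangency set `τ(S,V)` has Hausdorff
dimension exactly `d`. -/
theorem statement0 {n k : ℕ} (hk : 2 ≤ k) (hkn : k < n)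
    (V : Euc n → Submodule ℝ (Euc n)) (hV : IsC1PlaneField k univ V)
    (d : ℝ) (hd0 : 0 ≤ d) (hdk : d < k) :
    ∃ S : Set (Euc n), IsC11Submanifold k S ∧
      dimH (tangencySet S V) = ENNReal.ofReal d := by
  obtain ⟨S, hS, -, -, hdim⟩ := statement0_general hkn hV (mem_univ 0) hd0 hdk
  exact ⟨S, hS, hdim⟩
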